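/- arXiv:2004.09326 — 3 statements merged into one kernel-verified Lean document; each statement's English description precedes it below -/
import Mathlib

section
/- Let p ≥ 2 and let G = ⟨a₁,…,a_p | a₁²a₂²⋯a_p²⟩ be the fundamental group of the closed non-orientable surface of genus p, given by this presentation. Then every generating n-tuple of G satisfies n ≥ p and is Nielsen equivalent to the tuple (a₁,…,a_p, 1,…,1) consisting of the images of the standard generators followed by n − p copies of the identity. In particular, any two generating n-tuples of G are Nielsen equivalent. -/
/-- An elementary Nielsen transformation on an `n`-tuple of elements of a group:
(T1) invert an entry, (T2) swap two distinct entries, (T3) replace an entry by its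
product with another (distinct) entry. -/
inductive NielsenStep {G : Type*} [Group G] {n : ℕ} : (Fin n → G) → (Fin n → G) → Prop
  | inv (T : Fin n → G) (i : Fin n) : NielsenStep T (Function.update T i (T i)⁻¹)
  | swap (T : Fin n → G) (i j : Fin n) (hij : i ≠ j) : NielsenStep T (T ∘ Equiv.swap i j)
  | mul (T : Fin n → G) (i j : Fin n) (hij : i ≠ j) :
      NielsenStep T (Function.update T i (T i * T j))

/-- Two `n`-tuples of elements of a group are Nielsen equivalent if a finite chain of
elementary Nielsen transformations carries one to the other. -/
def NielsenEquiv {G : Type*} [Group G] {n : ℕ} (T T' : Fin n → G) : Prop :=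
  Relation.ReflTransGen NielsenStep T T'

/-- The non-orientable surface relator `a₁²a₂²⋯a_p²` in the free group on `a₁, …, a_p`. -/
def nonorientableSurfaceRelator (p : ℕ) : FreeGroup (Fin p) :=
  (List.ofFn fun j : Fin p => FreeGroup.of j ^ 2).prod

/-!
Let `w` be a word in which every generator occurs exactly twice. The main point is that a generating
tuple `T` of the group with the single relator `w` lifts to a generating tuple of the free group.
Nielsen's theorem brings the lift to the basis followed by copies of `1`: its entries are edges
attached to a finite tree in the Cayley graph, and as long as the resulting graph can be folded, a
Nielsen transformation makes the tree smaller.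

To lift `T`, take any lift to the free group, realise it by a finite labelled graph, and glue on
discs with boundary `w` until the graph folds to the rose. Fold two edges at a time, maintaining
that no nonempty set of discs is a closed surface modulo `2`. If some redundant edge misses one of
the two occurrences of its letter in `w`, then it lies on at most one disc, and removing it together
with that disc does not change the group which is represented. If there is no such edge, discs with
a common corner coincide, since otherwise the discs reached from them across edges would form a
closed surface; hence folding does not identify discs. In the rose every disc is closed modulo `2`,
so no discs are left when the folding ends, and the tuple carried by the rose is the desired lift.
-/

/-! ### Nielsen equivalence -/

namespace NielsenEquiv

variable {G H : Type*} [Group G] [Group H] {n : ℕ} {T T' T'' : Fin n → G}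

theorem refl (T : Fin n → G) : NielsenEquiv T T := Relation.ReflTransGen.refl

theorem trans (h : NielsenEquiv T T') (h' : NielsenEquiv T' T'') : NielsenEquiv T T'' :=
  Relation.ReflTransGen.trans h h'

theorem update_inv (T : Fin n → G) (i : Fin n) :
    NielsenEquiv T (Function.update T i (T i)⁻¹) :=
  .single (.inv T i)

theorem update_mul (T : Fin n → G) {i j : Fin n} (hij : i ≠ j) :
    NielsenEquiv T (Function.update T i (T i * T j)) :=
  .single (.mul T i j hij)

theorem update_mul_inv (T : Fin n → G) {i j : Fin n} (hij : i ≠ j) :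
    NielsenEquiv T (Function.update T i (T i * (T j)⁻¹)) := by
  have h := ((update_inv T j).trans (update_mul _ hij)).trans (update_inv _ j)
  convert h using 1
  ext k
  rcases eq_or_ne k j with rfl | hkj
  · simp [hij.symm]
  · rcases eq_or_ne k i with rfl | hki <;> simp [*]

theorem comp_perm (T : Fin n → G) (σ : Equiv.Perm (Fin n)) : NielsenEquiv T (T ∘ σ) := by
  induction σ using Equiv.Perm.swap_induction_on' with
  | one => exact refl T
  | mul_swap σ i j hij ih => exact ih.trans (.single (.swap _ i j hij))

theorem symm (h : NielsenEquiv T T') : NielsenEquiv T' T := by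
  induction h with
  | refl => exact refl T
  | @tail U U' _ hstep ih =>
    refine trans ?_ ih
    cases hstep with
    | inv i => simpa using update_inv (Function.update U i (U i)⁻¹) i
    | swap i j hij =>
      convert comp_perm (U ∘ Equiv.swap i j) (Equiv.swap i j) using 1
      ext k
      simp
    | mul i j hij => simpa [hij.symm] using update_mul_inv (Function.update U i (U i * U j)) hij

theorem map (f : G →* H) (h : NielsenEquiv T T') : NielsenEquiv (f ∘ T) (f ∘ T') := by
  refine Relation.ReflTransGen.lift (fun U : Fin n → G => f ∘ U) (fun U U' hstep => ?_) _ _ h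
  cases hstep with
  | inv i => simpa [Function.onFun, Function.comp_update] using NielsenStep.inv (f ∘ U) i
  | swap i j hij => exact .swap (f ∘ U) i j hij
  | mul i j hij =>
    simpa [Function.onFun, Function.comp_update] using NielsenStep.mul (f ∘ U) i j hij

theorem closure_range_le (h : NielsenEquiv T T') :
    Subgroup.closure (Set.range T') ≤ Subgroup.closure (Set.range T) := by
  induction h with
  | refl => exact le_rfl
  | @tail U U' _ hstep ih =>
    have hU (k) : U k ∈ Subgroup.closure (Set.range U) := Subgroup.subset_closure ⟨k, rfl⟩
    refine le_trans ((Subgroup.closure_le _).2 (Set.range_subset_iff.2 fun k => ?_)) ih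
    cases hstep with
    | inv i => by_cases hk : k = i <;> simp [hk, hU]
    | swap i j hij => exact hU _
    | mul i j hij => by_cases hk : k = i <;> simp [hk, hU, mul_mem]

theorem closure_range_eq (h : NielsenEquiv T T') :
    Subgroup.closure (Set.range T) = Subgroup.closure (Set.range T') :=
  le_antisymm h.symm.closure_range_le h.closure_range_le

theorem update_mul_of_mem_closure (T : Fin n → G) (i : Fin n) (x : G) {g : G}
    (hg : g ∈ Subgroup.closure (T '' {i}ᶜ)) :
    NielsenEquiv (Function.update T i x) (Function.update T i (x * g)) := by
  induction hg using Subgroup.closure_induction generalizing x with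
  | mem _ hx =>
    obtain ⟨j, hj, rfl⟩ := hx
    simpa [Function.update_of_ne hj] using update_mul (Function.update T i x) (Ne.symm hj)
  | one => simpa using refl _
  | mul g g' _ _ ih ih' => simpa [mul_assoc] using (ih x).trans (ih' (x * g))
  | inv g _ ih => simpa using (ih (x * g⁻¹)).symm

theorem update_inv_right (T : Fin n → G) (i : Fin n) (x : G) :
    NielsenEquiv (Function.update T i x) (Function.update T i x⁻¹) := by
  simpa using update_inv (Function.update T i x) i

theorem update_mul_mul_of_mem_closure (T : Fin n → G) (i : Fin n) (x : G) {g g' : G}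
    (hg : g ∈ Subgroup.closure (T '' {i}ᶜ)) (hg' : g' ∈ Subgroup.closure (T '' {i}ᶜ)) :
    NielsenEquiv (Function.update T i x) (Function.update T i (g * x * g')) := by
  have hleft := (update_inv_right T i x).trans
    ((update_mul_of_mem_closure T i x⁻¹ (inv_mem hg)).trans (update_inv_right T i _))
  simpa using hleft.trans (update_mul_of_mem_closure T i _ hg')

theorem of_mul_mul_mem_closure (B : Set (Fin n)) (hB : Set.EqOn T T' B)
    (h : ∀ i ∉ B, ∃ g ∈ Subgroup.closure (T '' B), ∃ g' ∈ Subgroup.closure (T '' B),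
      T' i = g * T i * g') :
    NielsenEquiv T T' := by
  classical
  suffices ∀ C : Finset (Fin n), Disjoint (C : Set (Fin n)) B →
      NielsenEquiv T (C.piecewise T' T) by
    convert this {i | i ∉ B} (Set.disjoint_left.2 (by simp)) using 1
    ext i
    by_cases hi : i ∈ B <;> simp [hi, hB _]
  intro C
  induction C using Finset.induction_on with
  | empty => simp [refl T]
  | insert i C hiC ih =>
    intro hCB
    simp only [Finset.coe_insert, Set.disjoint_insert_left] at hCB
    have hBC : Subgroup.closure (T '' B) ≤ Subgroup.closure (C.piecewise T' T '' {i}ᶜ) := by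
      refine Subgroup.closure_mono (Set.image_subset_iff.2 fun j hj => ⟨j, ?_, ?_⟩)
      · exact fun h => hCB.1 (h ▸ hj)
      · exact Finset.piecewise_eq_of_notMem _ _ _ fun h => Set.disjoint_left.1 hCB.2 h hj
    obtain ⟨g, hg, g', hg', hi⟩ := h i hCB.1
    have hstep := update_mul_mul_of_mem_closure _ i (C.piecewise T' T i) (hBC hg) (hBC hg')
    rw [Function.update_eq_self, Finset.piecewise_eq_of_notMem _ _ _ hiC, ← hi] at hstep
    rw [Finset.piecewise_insert]
    exact (ih hCB.2).trans hstep

end NielsenEquiv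

/-! ### The Cayley graph of a free group -/

theorem freeGroup_induction_mul_of_iff {α : Type*} {P : FreeGroup α → Prop} (one : P 1)
    (mul_of : ∀ y a, P y ↔ P (y * FreeGroup.of a)) (y : FreeGroup α) : P y := by
  suffices ∀ z, P z ↔ P (z * y) by simpa using (this 1).1 one
  induction y using FreeGroup.induction_on with
  | C1 => simp
  | of a => exact fun z => mul_of z a
  | inv_of a _ => exact fun z => by simpa using (mul_of (z * (FreeGroup.of a)⁻¹) a).symm
  | mul x y ihx ihy => exact fun z => by rw [ihx z, ihy, mul_assoc]

theorem exists_perm_of_biUnique {V : Type*} {R : V → V → Prop} (hR : Relator.BiUnique R)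
    (hfin : {x | ∃ y, R x y}.Finite) : ∃ σ : Equiv.Perm V, ∀ x y, R x y → σ x = y := by
  have := hfin.to_subtype
  choose f hf using fun x : {x | ∃ y, R x y} => x.2
  have hf_inj : Function.Injective f := fun x y hxy => Subtype.ext (hR.1 (hf x) (hxy ▸ hf y))
  obtain ⟨σ, hσ⟩ := Equiv.Perm.exists_extending_pair _ f Subtype.val_injective hf_inj
  exact ⟨σ, fun x y hxy => (hσ ⟨x, y, hxy⟩).trans (hR.2 (hf ⟨x, y, hxy⟩) hxy)⟩

theorem exists_freeGroup_hom_perm {α V : Type*} {R : α → V → V → Prop}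
    (hR : ∀ a, Relator.BiUnique (R a)) (hfin : ∀ a, {x | ∃ y, R a x y}.Finite) :
    ∃ ψ : FreeGroup α →* Equiv.Perm V, ∀ a x y, R a x y → ψ (FreeGroup.of a) x = y := by
  choose σ hσ using fun a => exists_perm_of_biUnique (hR a) (hfin a)
  exact ⟨FreeGroup.lift σ, by simpa using hσ⟩

/-- Adjacency in the Cayley graph of a free group with respect to its basis. -/
def CayleyAdj {α : Type*} (x y : FreeGroup α) : Prop :=
  (∃ a, y = x * FreeGroup.of a) ∨ ∃ a, x = y * FreeGroup.of a

theorem CayleyAdj.mul_left {α : Type*} {x y : FreeGroup α} (h : CayleyAdj x y) (g : FreeGroup α) :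
    CayleyAdj (g * x) (g * y) :=
  h.imp (fun ⟨a, ha⟩ => ⟨a, by rw [ha, mul_assoc]⟩) (fun ⟨a, ha⟩ => ⟨a, by rw [ha, mul_assoc]⟩)

/-- `CayleyReachable Y y`: the Cayley graph has a path from `1` to `y` with all vertices in `Y`. -/
inductive CayleyReachable {α : Type*} (Y : Set (FreeGroup α)) : FreeGroup α → Prop
  | one (h : 1 ∈ Y) : CayleyReachable Y 1
  | step {x y : FreeGroup α} (h : CayleyReachable Y x) (hxy : CayleyAdj x y) (hy : y ∈ Y) :
      CayleyReachable Y y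

namespace CayleyReachable

variable {α : Type*} {Y Y' : Set (FreeGroup α)} {u v y : FreeGroup α}

theorem mem (h : CayleyReachable Y y) : y ∈ Y := by
  cases h <;> assumption

theorem mono (hY : Y ⊆ Y') (h : CayleyReachable Y y) : CayleyReachable Y' y := by
  induction h with
  | one h => exact .one (hY h)
  | step _ hxy hy ih => exact .step ih hxy (hY hy)

theorem one_mem (h : CayleyReachable Y y) : 1 ∈ Y := by
  induction h with
  | one h => exact h
  | step _ _ _ ih => exact ih

theorem diff_singleton (h : CayleyReachable Y u) (huv : u ≠ v) :
    CayleyReachable (Y \ {v}) u ∨ CayleyReachable (Y \ {u}) v := by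
  by_contra! hnot
  have avoids {z} (hz : z ∈ Y)
      (hreach : ∀ Y', Y \ {u, v} ⊆ Y' → z ∈ Y' → CayleyReachable Y' z) : z ∈ Y \ {u, v} := by
    refine ⟨hz, ?_⟩
    rintro (rfl | rfl)
    · exact hnot.1 (hreach _ (by grind) ⟨hz, huv⟩)
    · exact hnot.2 (hreach _ (by grind) ⟨hz, huv.symm⟩)
  have key : ∀ z, CayleyReachable Y z → CayleyReachable (Y \ {u, v}) z := by
    intro z hz
    induction hz with
    | one h => exact .one (avoids h fun _ _ => .one)
    | step _ hxy hy ih => exact .step ih hxy (avoids hy fun _ hY' => .step (ih.mono hY') hxy)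
  exact (key u h).mem.2 (by simp)

theorem apply_eq {V : Type*} {ψ : FreeGroup α →* Equiv.Perm V} {pt : FreeGroup α → V}
    (hψ : ∀ x a, x ∈ Y → x * FreeGroup.of a ∈ Y →
      ψ (FreeGroup.of a) (pt (x * FreeGroup.of a)) = pt x)
    (h : CayleyReachable Y y) : ψ y (pt y) = pt 1 := by
  induction h with
  | one => simp
  | step hx hxy hy ih =>
    obtain ⟨a, rfl⟩ | ⟨a, rfl⟩ := hxy
    · rw [map_mul, Equiv.Perm.mul_apply, hψ _ a hx.mem hy, ih]
    · rwa [map_mul, Equiv.Perm.mul_apply, hψ _ a hy hx.mem] at ih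

end CayleyReachable

/-- A set of vertices of the Cayley graph spanning a connected subgraph through `1`, when
nonempty. -/
def IsCayleyConnected {α : Type*} (Y : Set (FreeGroup α)) : Prop :=
  ∀ y ∈ Y, CayleyReachable Y y

namespace IsCayleyConnected

variable {α : Type*} {Y Y' : Set (FreeGroup α)}

theorem singleton_one : IsCayleyConnected ({1} : Set (FreeGroup α)) := by
  rintro _ rfl
  exact .one rfl

theorem union (hY : IsCayleyConnected Y) (hY' : IsCayleyConnected Y') :
    IsCayleyConnected (Y ∪ Y') :=
  fun y hy => hy.elim (fun h => (hY y h).mono Set.subset_union_left)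
    fun h => (hY' y h).mono Set.subset_union_right

theorem insert {x y : FreeGroup α} (hY : IsCayleyConnected Y) (hx : x ∈ Y) (hxy : CayleyAdj x y) :
    IsCayleyConnected (insert y Y) := by
  have hsub := Set.subset_insert y Y
  rintro z (rfl | hz)
  · exact ((hY x hx).mono hsub).step hxy (Set.mem_insert _ _)
  · exact (hY z hz).mono hsub

theorem exists_finset_superset (Z : Finset (FreeGroup α)) :
    ∃ Y : Finset (FreeGroup α), Z ⊆ Y ∧ IsCayleyConnected (Y : Set (FreeGroup α)) := by
  classical
  have extend {x y} (hxy : CayleyAdj x y) :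
      (∃ Y : Finset (FreeGroup α), x ∈ Y ∧ IsCayleyConnected (Y : Set (FreeGroup α))) →
      ∃ Y : Finset (FreeGroup α), y ∈ Y ∧ IsCayleyConnected (Y : Set (FreeGroup α)) := by
    rintro ⟨Y, hx, hY⟩
    exact ⟨Insert.insert y Y, by simp, by simpa using hY.insert hx hxy⟩
  have single (y : FreeGroup α) :
      ∃ Y : Finset (FreeGroup α), y ∈ Y ∧ IsCayleyConnected (Y : Set (FreeGroup α)) := by
    induction y using freeGroup_induction_mul_of_iff with
    | one => exact ⟨{1}, by simp, by simpa using singleton_one⟩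
    | mul_of y a => exact ⟨extend (.inl ⟨a, rfl⟩), extend (.inr ⟨a, rfl⟩)⟩
  induction Z using Finset.induction_on with
  | empty => exact ⟨∅, by simp, by simp [IsCayleyConnected]⟩
  | insert z Z _ ih =>
    obtain ⟨Y, hZY, hY⟩ := ih
    obtain ⟨Y', hz, hY'⟩ := single z
    refine ⟨Y' ∪ Y, Finset.insert_subset (by simp [hz]) (hZY.trans (by simp)), ?_⟩
    simpa using hY'.union hY

end IsCayleyConnected

/-! ### Generating tuples of free groups -/

/-- The elements of the form `y * a * y'⁻¹` with `y, y' ∈ Y` and `a` a basis letter, together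
with `1`. When `Y` is connected, so that it spans a tree, these are the elements represented by
based loops crossing at most one edge outside that tree: an edge labelled `a` from `y` to `y'`. -/
def IsEdgeElement {α : Type*} (Y : Set (FreeGroup α)) (s : FreeGroup α) : Prop :=
  s = 1 ∨ ∃ y ∈ Y, ∃ y' ∈ Y, ∃ a, s = y * FreeGroup.of a * y'⁻¹

section Cut

variable {α : Type*} {Y : Set (FreeGroup α)} {u v y : FreeGroup α}

open Classical in
/-- Cut the tree spanned by `Y` at `v` and move the part not containing `1` so that `v` lands on
`u`; this is the factor by which the vertex `y` is moved. -/
noncomputable def cutFactor (Y : Set (FreeGroup α)) (u v y : FreeGroup α) : FreeGroup α :=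
  if CayleyReachable (Y \ {v}) y then 1 else u * v⁻¹

theorem cutFactor_of_reachable (h : CayleyReachable (Y \ {v}) y) : cutFactor Y u v y = 1 :=
  if_pos h

theorem cutFactor_of_not_reachable (h : ¬ CayleyReachable (Y \ {v}) y) :
    cutFactor Y u v y = u * v⁻¹ :=
  if_neg h

theorem cutFactor_mul_self : cutFactor Y u v v * v = u := by
  rw [cutFactor_of_not_reachable fun h => h.mem.2 rfl, inv_mul_cancel_right]

theorem cutFactor_mem_closure (Y : Set (FreeGroup α)) (u v y : FreeGroup α) :
    cutFactor Y u v y ∈ Subgroup.closure {u * v⁻¹} := by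
  unfold cutFactor
  split_ifs
  · exact one_mem _
  · exact Subgroup.mem_closure_singleton_self _

theorem IsCayleyConnected.image_cutFactor_mul (hY : IsCayleyConnected Y)
    (hu : CayleyReachable (Y \ {v}) u) :
    IsCayleyConnected ((fun y => cutFactor Y u v y * y) '' Y) := by
  set Y' := (fun y => cutFactor Y u v y * y) '' Y
  have mem {y} (hy : CayleyReachable (Y \ {v}) y) : y ∈ Y' :=
    ⟨y, hy.mem.1, by simp [cutFactor_of_reachable hy]⟩
  have reach {y} (hy : CayleyReachable (Y \ {v}) y) : CayleyReachable Y' y := by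
    induction hy with
    | one h => exact .one (mem (.one h))
    | step hx hxy hy ih => exact .step ih hxy (mem (hx.step hxy hy))
  suffices ∀ y, CayleyReachable Y y → CayleyReachable Y' (cutFactor Y u v y * y) by
    rintro _ ⟨y, hy, rfl⟩
    exact this y (hY y hy)
  intro y hy
  induction hy with
  | one => simpa [cutFactor_of_reachable (.one hu.one_mem)] using reach (.one hu.one_mem)
  | @step x y _ hxy hy ih =>
    by_cases hvy : y = v
    · rw [hvy, cutFactor_mul_self]
      exact reach hu
    by_cases hy' : CayleyReachable (Y \ {v}) y
    · simpa [cutFactor_of_reachable hy'] using reach hy'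
    · have hx' : ¬ CayleyReachable (Y \ {v}) x := fun h => hy' (h.step hxy ⟨hy, hvy⟩)
      rw [cutFactor_of_not_reachable hx'] at ih
      rw [cutFactor_of_not_reachable hy']
      refine ih.step (hxy.mul_left _) ⟨y, hy, ?_⟩
      simp [cutFactor_of_not_reachable hy']

theorem CayleyReachable.exists_adj_of_one_ne (hv : CayleyReachable Y v) (h1 : 1 ≠ v) :
    ∃ w, CayleyReachable (Y \ {v}) w ∧ CayleyAdj w v := by
  by_contra! hnot
  have key : ∀ z, CayleyReachable Y z → CayleyReachable (Y \ {v}) z := by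
    intro z hz
    induction hz with
    | one h => exact .one ⟨h, h1⟩
    | step _ hxy hy ih =>
      exact ih.step hxy ⟨hy, fun h => hnot _ ih (h ▸ hxy)⟩
  exact (key v hv).mem.2 rfl

theorem IsEdgeElement.exists_cutFactor (u v : FreeGroup α) {s : FreeGroup α}
    (hs : IsEdgeElement Y s) :
    ∃ g ∈ Subgroup.closure {u * v⁻¹}, ∃ g' ∈ Subgroup.closure {u * v⁻¹},
      IsEdgeElement ((fun y => cutFactor Y u v y * y) '' Y) (g * s * g') := by
  obtain rfl | ⟨y, hy, y', hy', a, rfl⟩ := hs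
  · exact ⟨1, one_mem _, 1, one_mem _, .inl (by simp)⟩
  · exact ⟨_, cutFactor_mem_closure Y u v y, _, inv_mem (cutFactor_mem_closure Y u v y'),
      .inr ⟨_, ⟨y, hy, rfl⟩, _, ⟨y', hy', rfl⟩, a, by group⟩⟩

theorem isEdgeElement_or_inv (hv : CayleyReachable Y v) (hu : CayleyReachable (Y \ {v}) u) :
    IsEdgeElement ((fun y => cutFactor Y u v y * y) '' Y) (u * v⁻¹) ∨
      IsEdgeElement ((fun y => cutFactor Y u v y * y) '' Y) (u * v⁻¹)⁻¹ := by
  have mem {y} (hy : CayleyReachable (Y \ {v}) y) : y ∈ (fun y => cutFactor Y u v y * y) '' Y :=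
    ⟨y, hy.mem.1, by simp [cutFactor_of_reachable hy]⟩
  obtain ⟨w, hw, ⟨a, rfl⟩ | ⟨a, rfl⟩⟩ := hv.exists_adj_of_one_ne fun h => hu.one_mem.2 h
  · exact .inr (.inr ⟨w, mem hw, u, mem hu, a, by group⟩)
  · exact .inl (.inr ⟨u, mem hu, _, mem hw, a, by group⟩)

end Cut

section Reduction

variable {α : Type*} {n : ℕ} {Y : Finset (FreeGroup α)} {S : Fin n → FreeGroup α}

/-- Some tuple Nielsen equivalent to `S` consists of edge elements of a connected set smaller than
`Y`. -/
def IsReducible (Y : Finset (FreeGroup α)) (S : Fin n → FreeGroup α) : Prop :=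
  ∃ (Y' : Finset (FreeGroup α)) (S' : Fin n → FreeGroup α), NielsenEquiv S S' ∧
    IsCayleyConnected (Y' : Set (FreeGroup α)) ∧ (∀ i, IsEdgeElement Y' (S' i)) ∧ Y'.card < Y.card

theorem isReducible_of_reachable (hY : IsCayleyConnected (Y : Set (FreeGroup α)))
    {i₀ : Fin n} {u v : FreeGroup α} (hv : v ∈ Y) (hu : CayleyReachable (Y \ {v} : Set _) u)
    (hS : ∀ i ≠ i₀, IsEdgeElement Y (S i)) (hs : S i₀ = u * v⁻¹) :
    IsReducible Y S := by
  classical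
  let Y' := Y.image fun y => cutFactor Y u v y * y
  have hY' : (Y' : Set (FreeGroup α)) = (fun y => cutFactor Y u v y * y) '' Y :=
    Finset.coe_image
  have hcard : Y'.card < Y.card := by
    refine lt_of_le_of_ne Finset.card_image_le fun h => hu.mem.2 ?_
    refine Finset.card_image_iff.1 h hu.mem.1 hv ?_
    simp [cutFactor_mul_self, cutFactor_of_reachable hu]
  obtain ⟨s', hs', hss', hSs'⟩ : ∃ s', IsEdgeElement Y' s' ∧ u * v⁻¹ ∈ Subgroup.closure {s'} ∧
      NielsenEquiv S (Function.update S i₀ s') := by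
    rw [hY']
    rcases isEdgeElement_or_inv (hY v hv) hu with h | h
    · exact ⟨_, h, Subgroup.mem_closure_singleton_self _, by simpa [← hs] using .refl S⟩
    · exact ⟨_, h, by simp [-mul_inv_rev], by simpa [-mul_inv_rev, ← hs] using .update_inv S i₀⟩
  choose! g hg g' hg' hgg' using fun i hi => (hS i hi).exists_cutFactor u v
  have hle : Subgroup.closure {u * v⁻¹} ≤
      Subgroup.closure (Function.update S i₀ s' '' {i₀}) := by
    simpa using hss'
  refine ⟨Y', Function.update (fun i => g i * S i * g' i) i₀ s', hSs'.trans ?_, ?_, ?_, hcard⟩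
  · refine .of_mul_mul_mem_closure {i₀} (by simp) fun i hi => ?_
    exact ⟨g i, hle (hg i hi), g' i, hle (hg' i hi), by simp_all⟩
  · exact hY' ▸ hY.image_cutFactor_mul hu
  · intro i
    by_cases hi : i = i₀
    · subst hi; simpa using hs'
    · simpa [hi, hY'] using hgg' i hi

theorem isReducible_of_eq_mul_inv
    (hY : IsCayleyConnected (Y : Set (FreeGroup α))) {i₀ : Fin n} {u v : FreeGroup α}
    (hu : u ∈ Y) (hv : v ∈ Y) (huv : u ≠ v) (hS : ∀ i ≠ i₀, IsEdgeElement Y (S i))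
    (hs : S i₀ = u * v⁻¹ ∨ S i₀ = v * u⁻¹) :
    IsReducible Y S := by
  wlog hreach : CayleyReachable (Y \ {v} : Set _) u generalizing u v
  · exact this hv hu huv.symm hs.symm ((hY u hu).diff_singleton huv |>.resolve_left hreach)
  rcases hs with hs | hs
  · exact isReducible_of_reachable hY hv hreach hS hs
  · obtain ⟨Y', S', h, h'⟩ := isReducible_of_reachable
      (i₀ := i₀) (S := Function.update S i₀ (S i₀)⁻¹) hY hv hreach (by simp_all) (by simp [hs])
    exact ⟨Y', S', (NielsenEquiv.update_inv S i₀).trans h, h'⟩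

theorem exists_nielsenEquiv_update_of_ne {p q : FreeGroup α} (hpq : p ≠ q)
    (hp : p = 1 ∨ ∃ i, S i = p) (hq : q = 1 ∨ ∃ i, S i = q) :
    (∃ i, NielsenEquiv S (Function.update S i (p⁻¹ * q))) ∧
      ∃ i, NielsenEquiv S (Function.update S i (p * q⁻¹)) := by
  wlog h : ∃ i, S i = q ∧ p ∈ Subgroup.closure (S '' {i}ᶜ) generalizing p q
  · have hqp : ∃ i, S i = p ∧ q ∈ Subgroup.closure (S '' {i}ᶜ) := by
      rcases hq with rfl | ⟨i, rfl⟩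
      · exact hp.resolve_left hpq |>.imp fun i hi => ⟨hi, one_mem _⟩
      · refine absurd ⟨i, rfl, ?_⟩ h
        rcases hp with rfl | ⟨j, rfl⟩
        · exact one_mem _
        · exact Subgroup.subset_closure ⟨j, fun hji => hpq (congrArg S hji), rfl⟩
    obtain ⟨⟨i, hi⟩, j, hj⟩ := this hpq.symm hq hp hqp
    exact ⟨⟨i, by simpa using hi.trans (.update_inv _ i)⟩,
      ⟨j, by simpa using hj.trans (.update_inv _ j)⟩⟩
  obtain ⟨i, rfl, hp⟩ := h
  have key {x : FreeGroup α} {g} (hx : NielsenEquiv S (Function.update S i x))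
      (hg : g ∈ Subgroup.closure (S '' {i}ᶜ)) : NielsenEquiv S (Function.update S i (g * x)) := by
    simpa using hx.trans (.update_mul_mul_of_mem_closure S i x hg (one_mem _))
  exact ⟨⟨i, key (by simpa using .refl S) (inv_mem hp)⟩, ⟨i, key (.update_inv S i) hp⟩⟩

/-- The edges `y → y'` labelled `a` of the graph obtained from the tree spanned by `Y` by
attaching, for each entry of `S`, the edge that makes it an edge element. -/
def EdgeRel (Y : Finset (FreeGroup α)) (S : Fin n → FreeGroup α) (a : α) (y y' : FreeGroup α) :
    Prop :=
  y ∈ Y ∧ y' ∈ Y ∧ (y * FreeGroup.of a * y'⁻¹ = 1 ∨ ∃ i, S i = y * FreeGroup.of a * y'⁻¹)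

theorem isReducible_of_not_biUnique
    (hY : IsCayleyConnected (Y : Set (FreeGroup α))) (hS : ∀ i, IsEdgeElement Y (S i)) {a : α}
    (ha : ¬ Relator.BiUnique (EdgeRel Y S a)) :
    IsReducible Y S := by
  obtain ⟨u, hu, v, hv, huv, i, hi⟩ : ∃ u ∈ Y, ∃ v ∈ Y, u ≠ v ∧
      ∃ i, NielsenEquiv S (Function.update S i (u * v⁻¹)) := by
    simp only [Relator.BiUnique, not_and_or, Relator.LeftUnique, Relator.RightUnique] at ha
    push Not at ha
    rcases ha with ⟨u, v, y, ⟨hu, -, hu'⟩, ⟨hv, -, hv'⟩, huv⟩ |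
      ⟨y, u, v, ⟨-, hu, hu'⟩, ⟨-, hv, hv'⟩, huv⟩
    · obtain ⟨i, hi⟩ := (exists_nielsenEquiv_update_of_ne (by simpa using huv) hu' hv').2
      exact ⟨u, hu, v, hv, huv, i, by convert hi using 2; group⟩
    · obtain ⟨i, hi⟩ := (exists_nielsenEquiv_update_of_ne (by simpa using huv) hu' hv').1
      exact ⟨u, hu, v, hv, huv, i, by convert hi using 2; group⟩
  obtain ⟨Y', S', h, h'⟩ := isReducible_of_eq_mul_inv (i₀ := i)
    (S := Function.update S i (u * v⁻¹)) hY hu hv huv (fun j hj => by simpa [hj] using hS j)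
    (.inl (by simp))
  exact ⟨Y', S', hi.trans h, h'⟩

theorem eq_one_of_edgeRel_biUnique (hY : IsCayleyConnected (Y : Set (FreeGroup α)))
    (hS : ∀ i, IsEdgeElement Y (S i)) (hgen : Subgroup.closure (Set.range S) = ⊤)
    (hR : ∀ a, Relator.BiUnique (EdgeRel Y S a)) {y : FreeGroup α} (hy : y ∈ Y) : y = 1 := by
  obtain ⟨ψ, hψ⟩ := exists_freeGroup_hom_perm (R := fun a => flip (EdgeRel Y S a))
    (fun a => ⟨fun _ _ _ h h' => (hR a).2 h h', fun _ _ _ h h' => (hR a).1 h h'⟩)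
    fun a => Y.finite_toSet.subset fun x ⟨_, h⟩ => h.2.1
  have hψY {y} (hy : y ∈ Y) : ψ y y = 1 :=
    (hY y hy).apply_eq (pt := id) fun x a hx hxa => hψ a _ _ ⟨hx, hxa, .inl (by simp)⟩
  have hstab : ⊤ ≤ (MulAction.stabilizer (Equiv.Perm (FreeGroup α)) (1 : FreeGroup α)).comap ψ := by
    rw [← hgen, Subgroup.closure_le, Set.range_subset_iff]
    intro i
    rcases hS i with h | ⟨y, hy, y', hy', a, h⟩
    · simp [h]
    · have hedge : ψ (FreeGroup.of a) y' = y := hψ a _ _ ⟨hy, hy', .inr ⟨i, h⟩⟩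
      have hy'_symm : (ψ y').symm 1 = y' := by rw [Equiv.symm_apply_eq, hψY hy']
      simp [h, Equiv.Perm.smul_def, hedge, hy'_symm, hψY hy]
  have hψ1 : ψ y 1 = 1 := hstab (Subgroup.mem_top y)
  exact (ψ y).injective ((hψY hy).trans hψ1.symm)

theorem exists_nielsenEquiv_one_or_of_of_isEdgeElement
    (hY : IsCayleyConnected (Y : Set (FreeGroup α))) (hS : ∀ i, IsEdgeElement Y (S i))
    (hgen : Subgroup.closure (Set.range S) = ⊤) :
    ∃ S', NielsenEquiv S S' ∧ ∀ i, S' i = 1 ∨ ∃ a, S' i = FreeGroup.of a := by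
  induction hcard : Y.card using Nat.strong_induction_on generalizing Y S with
  | _ k ih =>
    by_cases hR : ∀ a, Relator.BiUnique (EdgeRel Y S a)
    · have hone {y} (hy : y ∈ Y) : y = 1 := eq_one_of_edgeRel_biUnique hY hS hgen hR hy
      refine ⟨S, .refl S, fun i => (hS i).imp_right ?_⟩
      rintro ⟨y, hy, y', hy', a, h⟩
      exact ⟨a, by rw [h, hone hy, hone hy']; simp⟩
    · obtain ⟨a, ha⟩ := not_forall.1 hR
      obtain ⟨Y', S', hSS', hY', hS', hlt⟩ :=
        isReducible_of_not_biUnique hY hS ha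
      obtain ⟨S'', hS'', h⟩ := ih _ (hcard ▸ hlt) hY' hS' (hSS'.closure_range_eq ▸ hgen) rfl
      exact ⟨S'', hSS'.trans hS'', h⟩

theorem exists_nielsenEquiv_one_or_of (hgen : Subgroup.closure (Set.range S) = ⊤) :
    ∃ S', NielsenEquiv S S' ∧ ∀ i, S' i = 1 ∨ ∃ a, S' i = FreeGroup.of a := by
  classical
  cases isEmpty_or_nonempty α with
  | inl _ => exact ⟨S, .refl S, fun i => .inl (Subsingleton.elim _ _)⟩
  | inr hα =>
    obtain ⟨a⟩ := hα
    obtain ⟨Y, hSY, hY⟩ := IsCayleyConnected.exists_finset_superset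
      (insert 1 (Finset.univ.image fun i => S i * (FreeGroup.of a)⁻¹))
    refine exists_nielsenEquiv_one_or_of_of_isEdgeElement hY (fun i => .inr ?_) hgen
    exact ⟨S i * (FreeGroup.of a)⁻¹, hSY (by simp), 1, hSY (by simp), a, by simp⟩

end Reduction

section Standard

variable {p n : ℕ}

theorem exists_eq_of_of_closure_range_eq_top {α : Type*} {S : Fin n → FreeGroup α}
    (hgen : Subgroup.closure (Set.range S) = ⊤)
    (hS : ∀ i, S i = 1 ∨ ∃ a, S i = FreeGroup.of a) (a : α) : ∃ i, S i = FreeGroup.of a := by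
  classical
  by_contra! hnot
  let φ : FreeGroup α →* Multiplicative ℤ :=
    FreeGroup.lift fun b => if b = a then Multiplicative.ofAdd 1 else 1
  have hφ : φ = 1 := by
    refine MonoidHom.eq_of_eqOn_dense hgen ?_
    rintro _ ⟨i, rfl⟩
    rcases hS i with h | ⟨b, h⟩
    · simp [h]
    · have hba : b ≠ a := fun hba => hnot i (hba ▸ h)
      simp [φ, h, hba]
  have ha : φ (FreeGroup.of a) = 1 := by simp [hφ]
  simp [φ] at ha

/-- The generators of a free group of rank `p` followed by copies of `1`. -/
def paddedBasis (p n : ℕ) (i : Fin n) : FreeGroup (Fin p) :=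
  if h : (i : ℕ) < p then FreeGroup.of ⟨i, h⟩ else 1

theorem le_and_nielsenEquiv_paddedBasis_of_one_or_of {S : Fin n → FreeGroup (Fin p)}
    (hgen : Subgroup.closure (Set.range S) = ⊤)
    (hS : ∀ i, S i = 1 ∨ ∃ a, S i = FreeGroup.of a) :
    p ≤ n ∧ NielsenEquiv S (paddedBasis p n) := by
  classical
  choose pos hpos using exists_eq_of_of_closure_range_eq_top hgen hS
  have hpos_inj : Function.Injective pos := fun a b hab =>
    FreeGroup.of_injective (by rw [← hpos, ← hpos, hab])
  have hpn : p ≤ n := by simpa using Fintype.card_le_of_injective pos hpos_inj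
  obtain ⟨σ, hσ⟩ := Equiv.Perm.exists_extending_pair (Fin.castLE hpn) pos
    (Fin.castLE_injective hpn) hpos_inj
  refine ⟨hpn, .trans ?_ (.symm (.comp_perm _ σ.symm))⟩
  refine .of_mul_mul_mem_closure (Set.range pos) ?_ fun i hi => ?_
  · rintro _ ⟨a, rfl⟩
    have ha : σ.symm (pos a) = Fin.castLE hpn a := by rw [Equiv.symm_apply_eq, hσ]
    simp [paddedBasis, ha, hpos]
  · have hi' : ¬ (σ.symm i : ℕ) < p := fun h =>
      hi ⟨⟨_, h⟩, by rw [← hσ, ← Equiv.eq_symm_apply]; ext; simp⟩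
    refine ⟨(S i)⁻¹, inv_mem ?_, 1, one_mem _, by simp [paddedBasis, hi']⟩
    rcases hS i with h | ⟨a, h⟩
    · exact h ▸ one_mem _
    · exact Subgroup.subset_closure ⟨pos a, ⟨a, rfl⟩, by rw [hpos, h]⟩

theorem le_and_nielsenEquiv_paddedBasis {S : Fin n → FreeGroup (Fin p)}
    (hgen : Subgroup.closure (Set.range S) = ⊤) : p ≤ n ∧ NielsenEquiv S (paddedBasis p n) := by
  obtain ⟨S', hSS', hS'⟩ := exists_nielsenEquiv_one_or_of hgen
  obtain ⟨hpn, h⟩ :=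
    le_and_nielsenEquiv_paddedBasis_of_one_or_of (hSS'.closure_range_eq ▸ hgen) hS'
  exact ⟨hpn, hSS'.trans h⟩

end Standard

/-! ### Quadratic words and labelled complexes -/

/-- The word with letters `(w s).1` and exponents `±1` (`true` stands for `+1`) is quadratic: every
generator occurs in it exactly twice. -/
def IsQuadratic {α : Type*} {N : ℕ} (w : Fin N → α × Bool) : Prop :=
  ∀ a, {s | (w s).1 = a}.ncard = 2

namespace IsQuadratic

variable {α : Type*} {N : ℕ} {w : Fin N → α × Bool}

theorem exists_letter_eq (hw : IsQuadratic w) (a : α) : ∃ s, (w s).1 = a :=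
  Set.nonempty_of_ncard_ne_zero (s := {s | (w s).1 = a}) (by simp [hw a])

theorem exists_partner (hw : IsQuadratic w) (s : Fin N) :
    ∃ t, ∀ r, (w r).1 = (w s).1 → r ≠ s → r = t := by
  obtain ⟨x, y, -, hxy⟩ := Set.ncard_eq_two.1 (hw (w s).1)
  simp only [Set.ext_iff, Set.mem_ofPred_eq, Set.mem_insert_iff, Set.mem_singleton_iff] at hxy
  rcases (hxy s).1 rfl with rfl | rfl
  · exact ⟨y, fun r hr hrs => ((hxy r).1 hr).resolve_left hrs⟩
  · exact ⟨x, fun r hr hrs => ((hxy r).1 hr).resolve_right hrs⟩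

theorem sum_eq_zero {M : Type*} [AddCommGroup M] [Module (ZMod 2) M] (hw : IsQuadratic w)
    {f : Fin N → M} (hf : ∀ s t, (w s).1 = (w t).1 → f s = f t) : ∑ s, f s = 0 := by
  classical
  rw [← Finset.sum_fiberwise_of_maps_to (fun s _ => Finset.mem_image_of_mem (fun s => (w s).1)
    (Finset.mem_univ s))]
  refine Finset.sum_eq_zero fun a _ => ?_
  obtain ⟨x, y, hne, hxy⟩ := Set.ncard_eq_two.1 (hw a)
  have hfiber : Finset.univ.filter (fun s => (w s).1 = a) = {x, y} := by
    rw [← Finset.coe_inj]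
    simpa using hxy
  have hx : (w x).1 = a := hxy.ge (by simp)
  have hy : (w y).1 = a := hxy.ge (by simp)
  rw [hfiber, Finset.sum_pair hne, hf x y (hx.trans hy.symm), ZModModule.add_self]

end IsQuadratic

theorem forall_fin_of_iff_add_one {N : ℕ} [NeZero N] {P : Fin N → Prop} {s₀ s₁ : Fin N}
    (hP : ∀ s, s ≠ s₀ → (P s ↔ P (s + 1))) (h₁ : P s₁) (s : Fin N) : P s := by
  obtain ⟨m, rfl⟩ := Nat.exists_eq_succ_of_ne_zero (NeZero.ne N)
  have hstart : ∀ t, P (t + (s₀ + 1)) ↔ P (s₀ + 1) := by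
    intro t
    induction t using Fin.induction with
    | zero => simp
    | succ t ih =>
      rw [← ih, ← Fin.coeSucc_eq_succ, add_right_comm]
      refine (hP _ fun h => t.castSucc_lt_last.ne ?_).symm
      rw [← add_assoc, add_right_comm, add_eq_right] at h
      exact add_right_cancel (h.trans (Fin.last_add_one m).symm)
  have hall : ∀ s, P s ↔ P (s₀ + 1) := fun s => by simpa using hstart (s - (s₀ + 1))
  exact (hall s).2 ((hall s₁).1 h₁)

theorem map_closure_sup_normalClosure_le {F H : Type*} [Group F] [Group H] (φ : F →* H)
    (s R : Set F) {R' : Set H} (hR : ∀ x ∈ R, φ x ∈ Subgroup.normalClosure R') :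
    (Subgroup.closure s ⊔ Subgroup.normalClosure R).map φ ≤
      Subgroup.closure (φ '' s) ⊔ Subgroup.normalClosure R' := by
  rw [Subgroup.map_sup, MonoidHom.map_closure]
  refine sup_le_sup_left (Subgroup.map_le_iff_le_comap.2 ?_) _
  exact Subgroup.normalClosure_le_normal hR

/-- A finite labelled graph with faces glued to it: the edge `e` runs from `src e` to `tgt e` and
carries the label `lab e`; the boundary of the face `j` passes through the vertices `corner j s`,
for `s` in cyclic order, and crosses the edge `attach j s`, in one of the two directions, between
`corner j s` and `corner j (s + 1)`. Only members of `edges` and `faces` belong to the complex. -/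
structure LabelledComplex (α X V I : Type*) (N : ℕ) where
  edges : Finset X
  faces : Finset I
  lab : X → α
  src : X → V
  tgt : X → V
  attach : I → Fin N → X
  corner : I → Fin N → V

namespace LabelledComplex

variable {α X V I : Type*} {N : ℕ} (K : LabelledComplex α X V I N)

/-- The boundary of a face as a chain with coefficients in `ℤ/2`. -/
noncomputable def faceBoundary (j : I) : X →₀ ZMod 2 :=
  ∑ s, Finsupp.single (K.attach j s) 1

/-- The boundary of a face as a word in the edges, with the exponents of `w`. -/
def faceWord (w : Fin N → α × Bool) (j : I) : FreeGroup X :=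
  FreeGroup.mk (List.ofFn fun s => (K.attach j s, (w s).2))

/-- All faces are distinct discs whose boundary reads `w`: no two of them share an edge at the same
position of `w`, and no nonempty set of them is a closed surface modulo `2`. -/
structure HasFacesReading [NeZero N] (w : Fin N → α × Bool) : Prop where
  attach_mem : ∀ j ∈ K.faces, ∀ s, K.attach j s ∈ K.edges
  lab_attach : ∀ j ∈ K.faces, ∀ s, K.lab (K.attach j s) = (w s).1
  src_attach : ∀ j ∈ K.faces, ∀ s,
    K.src (K.attach j s) = K.corner j (bif (w s).2 then s else s + 1)
  tgt_attach : ∀ j ∈ K.faces, ∀ s,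
    K.tgt (K.attach j s) = K.corner j (bif (w s).2 then s + 1 else s)
  attach_injOn : ∀ s, Set.InjOn (K.attach · s) K.faces
  sum_faceBoundary_ne_zero : ∀ J ⊆ K.faces, J.Nonempty → ∑ j ∈ J, K.faceBoundary j ≠ 0

/-- The subgroup of the free group on the edges generated by `S` modulo the faces. -/
def markedSubgroup (w : Fin N → α × Bool) {n : ℕ} (S : Fin n → FreeGroup X) :
    Subgroup (FreeGroup X) :=
  Subgroup.closure (Set.range S) ⊔ Subgroup.normalClosure (K.faceWord w '' K.faces)

/-- There are words `S i` in the edges whose labels represent `T i` in `G` and which generate,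
modulo the faces, all edges up to a change of base point `q`. -/
def IsMarkedBy (w : Fin N → α × Bool) {G : Type*} [Group G] (π : FreeGroup α →* G) {n : ℕ}
    (T : Fin n → G) : Prop :=
  ∃ S : Fin n → FreeGroup X, (∀ i, π (FreeGroup.map K.lab (S i)) = T i) ∧
    ∃ q : V → FreeGroup X, ∀ e ∈ K.edges,
      q (K.src e) * FreeGroup.of e * (q (K.tgt e))⁻¹ ∈ K.markedSubgroup w S

/-- Identifying vertices along `r` leaves no two edges of `E` to be folded. -/
def FoldClosed (E : Set X) (r : Setoid V) : Prop :=
  ∀ e ∈ E, ∀ f ∈ E, K.lab e = K.lab f → (r (K.src e) (K.src f) ↔ r (K.tgt e) (K.tgt f))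

/-- Folding the graph results in the rose with one petal for each label. -/
structure FoldsToRose : Prop where
  rel_of_foldClosed : ∀ r, K.FoldClosed K.edges r → ∀ e ∈ K.edges, ∀ f ∈ K.edges,
    r (K.src e) (K.src f) ∧ r (K.src e) (K.tgt f)
  exists_lab_eq : ∀ a, ∃ e ∈ K.edges, K.lab e = a

/-- The complexes to which the reduction process applies. -/
structure IsTupleComplex [NeZero N] (w : Fin N → α × Bool) {G : Type*} [Group G]
    (π : FreeGroup α →* G) {n : ℕ} (T : Fin n → G) : Prop where
  hasFacesReading : K.HasFacesReading w
  isMarkedBy : K.IsMarkedBy w π T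
  foldsToRose : K.FoldsToRose

/-- Folding the rest of the graph identifies `e` with another edge. -/
def IsRedundant (e : X) : Prop :=
  ∀ r, K.FoldClosed (K.edges \ {e}) r → ∃ g ∈ (K.edges : Set X) \ {e}, K.lab g = K.lab e ∧
    r (K.src e) (K.src g) ∧ r (K.tgt e) (K.tgt g)

/-- The edge `e` lies on a face at every position of `w` allowed by its label. -/
def IsFull (w : Fin N → α × Bool) (e : X) : Prop :=
  ∀ s, (w s).1 = K.lab e → ∃ j ∈ K.faces, K.attach j s = e

variable {K} {w : Fin N → α × Bool}

theorem map_faceWord {Y : Type*} (f : X → Y) (j : I) : FreeGroup.map f (K.faceWord w j) =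
    FreeGroup.mk (List.ofFn fun s => (f (K.attach j s), (w s).2)) := by
  simp [faceWord, List.map_ofFn, Function.comp_def]

section

variable [NeZero N]

theorem HasFacesReading.map_lab_faceWord (hK : K.HasFacesReading w) {j : I} (hj : j ∈ K.faces) :
    FreeGroup.map K.lab (K.faceWord w j) = FreeGroup.mk (List.ofFn w) := by
  simp [map_faceWord, hK.lab_attach j hj]

theorem HasFacesReading.exists_position (hK : K.HasFacesReading w) (hw : IsQuadratic w) {e : X}
    (he : ¬ K.IsFull w e) : ∃ s₀, ∀ j ∈ K.faces, ∀ s, K.attach j s = e → s = s₀ := by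
  simp only [IsFull, not_forall, not_exists, not_and] at he
  obtain ⟨t, ht, hfree⟩ := he
  obtain ⟨s₀, hs₀⟩ := hw.exists_partner t
  refine ⟨s₀, fun j hj s hs => hs₀ s ?_ ?_⟩
  · rw [← hK.lab_attach j hj, hs, ht]
  · rintro rfl
    exact hfree j hj hs

end

end LabelledComplex

/-! ### Removing redundant edges -/

theorem freeGroup_mk_singleton {X : Type*} (x : X) (b : Bool) :
    FreeGroup.mk [(x, b)] = bif b then FreeGroup.of x else (FreeGroup.of x)⁻¹ := by
  cases b <;> rfl

theorem freeGroup_hom_mk_eq_self {X : Type*} {ρ : FreeGroup X →* FreeGroup X} {L : List (X × Bool)}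
    (hρ : ∀ x ∈ L, ρ (FreeGroup.of x.1) = FreeGroup.of x.1) :
    ρ (FreeGroup.mk L) = FreeGroup.mk L := by
  induction L with
  | nil => exact map_one ρ
  | cons x L ih =>
    have hx : ρ (FreeGroup.mk [x]) = FreeGroup.mk [x] := by
      have h := hρ x List.mem_cons_self
      obtain ⟨x, _ | _⟩ := x <;> simp_all [freeGroup_mk_singleton]
    rw [← List.singleton_append, ← FreeGroup.mul_mk, map_mul, hx,
      ih fun y hy => hρ y (List.mem_cons_of_mem _ hy)]

theorem exists_hom_eliminating_letter {X G : Type*} [Group G] {N : ℕ} (f : Fin N → X × Bool)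
    {s₀ : Fin N} (hs₀ : ∀ s, (f s).1 = (f s₀).1 → s = s₀) {φ : FreeGroup X →* G}
    (hφ : φ (FreeGroup.mk (List.ofFn f)) = 1) :
    ∃ ρ : FreeGroup X →* FreeGroup X, (∀ x ≠ (f s₀).1, ρ (FreeGroup.of x) = FreeGroup.of x) ∧
      ρ (FreeGroup.mk (List.ofFn f)) = 1 ∧ φ.comp ρ = φ := by
  classical
  obtain ⟨l, l', hl⟩ := List.append_of_mem (List.mem_finRange s₀)
  have hnodup : s₀ ∉ l ++ l' :=
    (List.nodup_middle.1 (hl ▸ List.nodup_finRange N)).notMem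
  rcases hfs₀ : f s₀ with ⟨e, b⟩
  set u := FreeGroup.mk (l.map f)
  set v := FreeGroup.mk (l'.map f)
  have hword : FreeGroup.mk (List.ofFn f) = u * FreeGroup.mk [(e, b)] * v := by
    simp [u, v, FreeGroup.mul_mk, List.ofFn_eq_map, hl, hfs₀]
  let g : X → FreeGroup X :=
    Function.update FreeGroup.of e (bif b then u⁻¹ * v⁻¹ else v * u)
  have hfix : ∀ k ⊆ l ++ l', FreeGroup.lift g (.mk (k.map f)) = FreeGroup.mk (k.map f) := by
    refine fun k hk => freeGroup_hom_mk_eq_self fun x hx => ?_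
    obtain ⟨s, hs, rfl⟩ := List.mem_map.1 hx
    have hse : (f s).1 ≠ e := fun h => hnodup (hs₀ s (h.trans (by rw [hfs₀])) ▸ hk hs)
    simp [g, hse]
  have hletter : FreeGroup.lift g (FreeGroup.mk [(e, b)]) = u⁻¹ * v⁻¹ := by
    cases b <;> simp [g]
  have hρ : FreeGroup.lift g (FreeGroup.mk (List.ofFn f)) = 1 := by
    have hu : FreeGroup.lift g u = u := hfix l (by simp)
    have hv : FreeGroup.lift g v = v := hfix l' (by simp)
    rw [hword, map_mul, map_mul, hu, hv, hletter]
    group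
  refine ⟨FreeGroup.lift g, fun x hx => by simp [g, hx], hρ, FreeGroup.ext_hom _ _ fun x => ?_⟩
  rcases eq_or_ne x e with rfl | hx
  · have hφ_letter : φ (FreeGroup.mk [(x, b)]) = φ (u⁻¹ * v⁻¹) := by
      rw [hword, map_mul, map_mul, mul_eq_one_iff_eq_inv] at hφ
      rw [map_mul, map_inv, map_inv, ← hφ]
      group
    rw [← hletter, eq_comm, freeGroup_mk_singleton] at hφ_letter
    rw [MonoidHom.comp_apply]
    cases b
    · simpa only [cond_false, map_inv, inv_inj] using hφ_letter
    · exact hφ_letter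
  · simp [g, hx]

namespace LabelledComplex

variable {α X V I : Type*} {N : ℕ} {K : LabelledComplex α X V I N} {w : Fin N → α × Bool}
  {G : Type*} [Group G] {π : FreeGroup α →* G} {n : ℕ} {T : Fin n → G} {e : X}

theorem IsRedundant.exists_lab_eq (he : K.IsRedundant e) :
    ∃ g ∈ (K.edges : Set X) \ {e}, K.lab g = K.lab e := by
  obtain ⟨g, hg, hlab, -⟩ := he ⊤ fun _ _ _ _ _ => Iff.rfl
  exact ⟨g, hg, hlab⟩

theorem IsRedundant.foldClosed (he : K.IsRedundant e) {r : Setoid V}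
    (hr : K.FoldClosed (K.edges \ {e}) r) : K.FoldClosed K.edges r := by
  obtain ⟨g, hg, hlab, hsrc, htgt⟩ := he r hr
  have replace : ∀ x ∈ K.edges, ∃ x' ∈ (K.edges : Set X) \ {e}, K.lab x' = K.lab x ∧
      r (K.src x) (K.src x') ∧ r (K.tgt x) (K.tgt x') := by
    intro x hx
    rcases eq_or_ne x e with rfl | hxe
    · exact ⟨g, hg, hlab, hsrc, htgt⟩
    · exact ⟨x, ⟨hx, hxe⟩, rfl, r.refl _, r.refl _⟩
  intro x hx y hy hxy
  obtain ⟨x', hx', hlabx, hsx, htx⟩ := replace x hx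
  obtain ⟨y', hy', hlaby, hsy, hty⟩ := replace y hy
  have h := hr x' hx' y' hy' (by rw [hlabx, hlaby, hxy])
  exact ⟨fun hs => r.trans htx (r.trans (h.1 (r.trans (r.symm hsx) (r.trans hs hsy))) (r.symm hty)),
    fun ht => r.trans hsx (r.trans (h.2 (r.trans (r.symm htx) (r.trans ht hty))) (r.symm hsy))⟩

variable [DecidableEq X]

/-- The complex obtained from `K` by removing the edge `e` and all faces outside `J`. -/
def erase (K : LabelledComplex α X V I N) (e : X) (J : Finset I) : LabelledComplex α X V I N :=
  { K with edges := K.edges.erase e, faces := J }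

theorem FoldsToRose.erase (hK : K.FoldsToRose) (he : K.IsRedundant e) (J : Finset I) :
    (K.erase e J).FoldsToRose where
  rel_of_foldClosed r hr x hx y hy :=
    hK.rel_of_foldClosed r (he.foldClosed (by rwa [← Finset.coe_erase]))
      x (Finset.mem_of_mem_erase hx) y (Finset.mem_of_mem_erase hy)
  exists_lab_eq a := by
    obtain ⟨x, hx, rfl⟩ := hK.exists_lab_eq a
    rcases eq_or_ne x e with rfl | hxe
    · obtain ⟨g, hg, hlab⟩ := he.exists_lab_eq
      exact ⟨g, by simpa [LabelledComplex.erase, and_comm] using hg, hlab⟩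
    · exact ⟨x, Finset.mem_erase.2 ⟨hxe, hx⟩, rfl⟩

theorem IsMarkedBy.erase (hK : K.IsMarkedBy w π T) {J : Finset I} {ρ : FreeGroup X →* FreeGroup X}
    (hρ : ∀ x ≠ e, ρ (FreeGroup.of x) = FreeGroup.of x)
    (hfaces : ∀ j ∈ K.faces, ρ (K.faceWord w j) = 1 ∨ j ∈ J ∧ ∀ s, K.attach j s ≠ e)
    (hπ : (π.comp (FreeGroup.map K.lab)).comp ρ = π.comp (FreeGroup.map K.lab)) :
    (K.erase e J).IsMarkedBy w π T := by
  obtain ⟨S, hS, q, hq⟩ := hK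
  have hle : (K.markedSubgroup w S).map ρ ≤ (K.erase e J).markedSubgroup w (ρ ∘ S) := by
    rw [markedSubgroup, markedSubgroup, Set.range_comp]
    refine map_closure_sup_normalClosure_le _ _ _ ?_
    rintro _ ⟨j, hj, rfl⟩
    obtain h | ⟨hjJ, hje⟩ := hfaces j hj
    · simpa only [h] using one_mem _
    · refine Subgroup.subset_normalClosure ⟨j, hjJ, (freeGroup_hom_mk_eq_self fun x hx => ?_).symm⟩
      obtain ⟨s, rfl⟩ := List.mem_ofFn.1 hx
      exact hρ _ (hje s)
  refine ⟨ρ ∘ S, fun i => (DFunLike.congr_fun hπ (S i)).trans (hS i), ρ ∘ q, fun x hx => ?_⟩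
  obtain ⟨hxe, hx⟩ := Finset.mem_erase.1 hx
  have h := hle (Subgroup.mem_map_of_mem ρ (hq x hx))
  rwa [map_mul, map_mul, map_inv, hρ x hxe] at h

variable [NeZero N]

theorem HasFacesReading.erase (hK : K.HasFacesReading w) {J : Finset I} (hJ : J ⊆ K.faces)
    (he : ∀ j ∈ J, ∀ s, K.attach j s ≠ e) : (K.erase e J).HasFacesReading w where
  attach_mem j hj s := Finset.mem_erase.2 ⟨he j hj s, hK.attach_mem j (hJ hj) s⟩
  lab_attach j hj := hK.lab_attach j (hJ hj)
  src_attach j hj := hK.src_attach j (hJ hj)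
  tgt_attach j hj := hK.tgt_attach j (hJ hj)
  attach_injOn s := (hK.attach_injOn s).mono hJ
  sum_faceBoundary_ne_zero J' hJ' := hK.sum_faceBoundary_ne_zero J' (hJ'.trans hJ)

theorem IsTupleComplex.exists_erase (hK : K.IsTupleComplex w π T) (hw : IsQuadratic w)
    (hπ : π (FreeGroup.mk (List.ofFn w)) = 1) (he : e ∈ K.edges) (hred : K.IsRedundant e)
    (hfull : ¬ K.IsFull w e) :
    ∃ J, (K.erase e J).IsTupleComplex w π T := by
  classical
  have hface := hK.hasFacesReading
  obtain ⟨s₀, hs₀⟩ := hface.exists_position hw hfull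
  by_cases hfree : ∀ j ∈ K.faces, ∀ s, K.attach j s ≠ e
  · obtain ⟨g, -, hg⟩ := hred.exists_lab_eq
    refine ⟨K.faces, hface.erase subset_rfl hfree, ?_, hK.foldsToRose.erase hred _⟩
    refine hK.isMarkedBy.erase (ρ := FreeGroup.map (Function.update id e g))
      (fun x hx => by simp [hx]) (fun j hj => .inr ⟨hj, hfree j hj⟩)
      (FreeGroup.ext_hom _ _ fun x => ?_)
    rcases eq_or_ne x e with rfl | hx <;> simp [*]
  · push Not at hfree
    obtain ⟨j₀, hj₀, s, hs⟩ := hfree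
    obtain rfl := hs₀ j₀ hj₀ s hs
    obtain ⟨ρ, hρ, hρ_word, hπρ⟩ :=
      exists_hom_eliminating_letter (fun s => (K.attach j₀ s, (w s).2))
        (s₀ := s) (φ := π.comp (FreeGroup.map K.lab)) (fun t ht => hs₀ j₀ hj₀ t (ht.trans hs))
        (by rwa [MonoidHom.comp_apply, ← faceWord, hface.map_lab_faceWord hj₀])
    have hoff : ∀ j ∈ K.faces, j ≠ j₀ → ∀ t, K.attach j t ≠ e := by
      intro j hj hne t ht
      obtain rfl := hs₀ j hj t ht
      exact hne (hface.attach_injOn _ hj hj₀ (ht.trans hs.symm))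
    refine ⟨K.faces.erase j₀, hface.erase (Finset.erase_subset _ _) (fun j hj => ?_),
      hK.isMarkedBy.erase (by simpa [hs] using hρ) (fun j hj => ?_) hπρ,
      hK.foldsToRose.erase hred _⟩
    · exact hoff j (Finset.mem_of_mem_erase hj) (Finset.ne_of_mem_erase hj)
    · rcases eq_or_ne j j₀ with rfl | hne
      · exact .inl hρ_word
      · exact .inr ⟨Finset.mem_erase.2 ⟨hne, hj⟩, hoff j hj hne⟩

end LabelledComplex

/-! ### Folding -/

namespace LabelledComplex

section Cycles

variable {α X V I : Type*} {N : ℕ} (K : LabelledComplex α X V I N)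

/-- The boundary map from edges to vertices with coefficients in `ℤ/2`. -/
noncomputable def boundary : (X →₀ ZMod 2) →ₗ[ZMod 2] V →₀ ZMod 2 :=
  Finsupp.linearCombination _ fun e => Finsupp.single (K.src e) 1 + Finsupp.single (K.tgt e) 1

theorem boundary_single (e : X) : K.boundary (Finsupp.single e 1) =
    Finsupp.single (K.src e) 1 + Finsupp.single (K.tgt e) 1 := by
  simp [boundary]

variable {K} {w : Fin N → α × Bool} [NeZero N]

theorem HasFacesReading.boundary_faceBoundary (hK : K.HasFacesReading w) {j : I}
    (hj : j ∈ K.faces) : K.boundary (K.faceBoundary j) = 0 := by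
  calc K.boundary (K.faceBoundary j)
      = ∑ s, (Finsupp.single (K.corner j s) 1 + Finsupp.single (K.corner j (s + 1)) 1) := by
        rw [faceBoundary, map_sum]
        refine Finset.sum_congr rfl fun s _ => ?_
        rw [boundary_single, hK.src_attach j hj, hK.tgt_attach j hj]
        cases (w s).2
        · exact add_comm _ _
        · rfl
    _ = 0 := by
        have hshift := Equiv.sum_comp (Equiv.addRight (1 : Fin N)) fun s =>
          Finsupp.single (K.corner j s) (1 : ZMod 2)
        simp only [Equiv.coe_addRight] at hshift
        rw [Finset.sum_add_distrib, hshift, ZModModule.add_self]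

theorem mapDomain_update_id [DecidableEq X] (e' e'' : X) (z : X →₀ ZMod 2) :
    z.mapDomain (Function.update id e'' e') =
      z + z e'' • (Finsupp.single e' 1 + Finsupp.single e'' 1) := by
  induction z using Finsupp.induction_linear with
  | zero => simp
  | add z z' hz hz' =>
    rw [Finsupp.mapDomain_add, hz, hz', Finsupp.add_apply, add_smul]
    abel
  | single x c =>
    rcases eq_or_ne x e'' with rfl | hx
    · simp [add_left_comm _ (Finsupp.single e' c), ZModModule.add_self]
    · simp [hx]

end Cycles

variable {α X V I : Type*} {N : ℕ} {K : LabelledComplex α X V I N} {w : Fin N → α × Bool}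
  {G : Type*} [Group G] {π : FreeGroup α →* G} {n : ℕ} {T : Fin n → G}

/-- The complex obtained from `K` by moving edges along `f` and vertices along `θ`. -/
def map [DecidableEq X] (K : LabelledComplex α X V I N) (f : X → X) (θ : V → V) :
    LabelledComplex α X V I N where
  edges := K.edges.image f
  faces := K.faces
  lab := K.lab
  src := θ ∘ K.src
  tgt := θ ∘ K.tgt
  attach j s := f (K.attach j s)
  corner j s := θ (K.corner j s)

/-- The maps `f` of edges and `θ` of vertices are compatible with the structure of `K`, and `θ`
only moves a vertex along two edges which share their other end and are identified by `f`. -/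
structure IsFoldMap (K : LabelledComplex α X V I N) (f : X → X) (θ : V → V) : Prop where
  lab_eq : ∀ e, K.lab (f e) = K.lab e
  src_eq : ∀ e, θ (K.src (f e)) = θ (K.src e)
  tgt_eq : ∀ e, θ (K.tgt (f e)) = θ (K.tgt e)
  exists_fold : ∀ v, θ v = v ∨ ∃ e' ∈ K.edges, ∃ e'' ∈ K.edges, f e' = f e'' ∧
    (K.src e' = K.src e'' ∧ K.tgt e' = θ v ∧ K.tgt e'' = v ∨
      K.tgt e' = K.tgt e'' ∧ K.src e' = θ v ∧ K.src e'' = v)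

variable {f : X → X} {θ : V → V} [DecidableEq X]

theorem FoldsToRose.map (hK : K.FoldsToRose) (h : K.IsFoldMap f θ) : (K.map f θ).FoldsToRose where
  rel_of_foldClosed r hr := by
    have hcomap : K.FoldClosed K.edges (r.comap θ) := by
      intro x hx y hy hxy
      have hfxy := hr (f x) (Finset.mem_image_of_mem f hx) (f y) (Finset.mem_image_of_mem f hy)
        (by simpa [LabelledComplex.map, h.lab_eq])
      simpa [LabelledComplex.map, h.src_eq, h.tgt_eq, Setoid.comap_rel] using hfxy
    intro x hfx y hfy
    obtain ⟨x, hx, rfl⟩ := Finset.mem_image.1 hfx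
    obtain ⟨y, hy, rfl⟩ := Finset.mem_image.1 hfy
    simpa [LabelledComplex.map, h.src_eq, h.tgt_eq, Setoid.comap_rel] using
      hK.rel_of_foldClosed _ hcomap x hx y hy
  exists_lab_eq a := by
    obtain ⟨x, hx, rfl⟩ := hK.exists_lab_eq a
    exact ⟨f x, Finset.mem_image_of_mem f hx, h.lab_eq x⟩

theorem IsMarkedBy.map (hK : K.IsMarkedBy w π T) (h : K.IsFoldMap f θ) :
    (K.map f θ).IsMarkedBy w π T := by
  obtain ⟨S, hS, q, hq⟩ := hK
  have hle : (K.markedSubgroup w S).map (FreeGroup.map f) ≤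
      (K.map f θ).markedSubgroup w (FreeGroup.map f ∘ S) := by
    rw [markedSubgroup, markedSubgroup, Set.range_comp]
    refine map_closure_sup_normalClosure_le _ _ _ ?_
    rintro _ ⟨j, hj, rfl⟩
    exact Subgroup.subset_normalClosure ⟨j, hj, (map_faceWord f j).symm⟩
  have hlab : (FreeGroup.map K.lab).comp (FreeGroup.map f) = FreeGroup.map K.lab :=
    FreeGroup.ext_hom _ _ fun x => by simp [h.lab_eq]
  have hq_map : ∀ e ∈ K.edges, FreeGroup.map f (q (K.src e)) * FreeGroup.of (f e) *
      (FreeGroup.map f (q (K.tgt e)))⁻¹ ∈ (K.map f θ).markedSubgroup w (FreeGroup.map f ∘ S) :=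
    fun e he => by simpa using hle (Subgroup.mem_map_of_mem (FreeGroup.map f) (hq e he))
  have hθ : ∀ v, FreeGroup.map f (q (θ v)) * (FreeGroup.map f (q v))⁻¹ ∈
      (K.map f θ).markedSubgroup w (FreeGroup.map f ∘ S) := by
    intro v
    obtain hv | ⟨e', he', e'', he'', hf, hends⟩ := h.exists_fold v
    · simp [hv, one_mem]
    have h' := hq_map e' he'
    have h'' := hq_map e'' he''
    obtain ⟨h_eq, hQ', hQ''⟩ | ⟨h_eq, hQ', hQ''⟩ := hends
    · rw [h_eq, hf, hQ'] at h'
      rw [hQ''] at h''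
      simpa [mul_assoc] using mul_mem (inv_mem h') h''
    · rw [h_eq, hf, hQ'] at h'
      rw [hQ''] at h''
      simpa [mul_assoc] using mul_mem h' (inv_mem h'')
  refine ⟨FreeGroup.map f ∘ S, fun i => ?_, FreeGroup.map f ∘ q, fun x hx => ?_⟩
  · exact (congrArg π (DFunLike.congr_fun hlab (S i))).trans (hS i)
  · obtain ⟨y, hy, rfl⟩ := Finset.mem_image.1 hx
    have hmem := mul_mem (mul_mem (hθ (K.src y)) (hq_map y hy)) (inv_mem (hθ (K.tgt y)))
    simpa [LabelledComplex.map, h.src_eq, h.tgt_eq, mul_assoc] using hmem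

/-- The edges `e'` and `e''` have the same label and either the same source, and targets `Q'` and
`Q''`, or the same target, and sources `Q'` and `Q''`. -/
def IsFoldPair (K : LabelledComplex α X V I N) (e' e'' : X) (Q' Q'' : V) : Prop :=
  K.lab e' = K.lab e'' ∧ (K.src e' = K.src e'' ∧ K.tgt e' = Q' ∧ K.tgt e'' = Q'' ∨
    K.tgt e' = K.tgt e'' ∧ K.src e' = Q' ∧ K.src e'' = Q'')

variable {e' e'' : X} {Q' Q'' : V}

theorem IsFoldPair.isFoldMap [DecidableEq V] (h : K.IsFoldPair e' e'' Q' Q'') (he' : e' ∈ K.edges)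
    (he'' : e'' ∈ K.edges) :
    K.IsFoldMap (Function.update id e'' e') (Function.update id Q'' Q') where
  lab_eq e := by
    rcases eq_or_ne e e'' with rfl | he <;> simp [*, h.1]
  src_eq e := by
    rcases eq_or_ne e e'' with rfl | he
    · obtain h | h := h.2
      · simp [h.1]
      · simp [h, Function.update_apply]
    · simp [he]
  tgt_eq e := by
    rcases eq_or_ne e e'' with rfl | he
    · obtain h | h := h.2
      · simp [h, Function.update_apply]
      · simp [h.1]
    · simp [he]
  exists_fold v := by
    rcases eq_or_ne v Q'' with rfl | hv
    · exact .inr ⟨e', he', e'', he'', by simp [Function.update_apply], by simpa using h.2⟩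
    · exact .inl (by simp [hv])

/-- Folding creates no relation between the faces. -/
theorem IsFoldPair.eq_zero_of_mapDomain_eq_zero (h : K.IsFoldPair e' e'' Q' Q'') (hQ : Q' ≠ Q'')
    {z : X →₀ ZMod 2} (hz : K.boundary z = 0)
    (hmap : z.mapDomain (Function.update id e'' e') = 0) : z = 0 := by
  have hz_eq : z = z e'' • (Finsupp.single e' 1 + Finsupp.single e'' 1) := by
    rw [← sub_eq_zero, ZModModule.sub_eq_add, ← mapDomain_update_id, hmap]
  have hboundary : K.boundary (Finsupp.single e' 1 + Finsupp.single e'' 1) =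
      Finsupp.single Q' 1 + Finsupp.single Q'' 1 := by
    rw [map_add, boundary_single, boundary_single]
    obtain ⟨h_eq, h', h''⟩ | ⟨h_eq, h', h''⟩ := h.2
    · rw [h_eq, h', h'', add_add_add_comm, ZModModule.add_self, zero_add]
    · rw [h_eq, h', h'', add_add_add_comm, ZModModule.add_self, add_zero]
  rw [hz_eq, map_smul, hboundary] at hz
  have hcoeff : z e'' = 0 := by
    simpa [hQ.symm, Finsupp.single_apply] using DFunLike.congr_fun hz Q'
  rw [hz_eq, hcoeff, zero_smul]

variable [NeZero N]

theorem HasFacesReading.map (hK : K.HasFacesReading w) (h : K.IsFoldMap f θ)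
    (hinj : ∀ s, Set.InjOn (fun j => f (K.attach j s)) K.faces)
    (hf : ∀ z, K.boundary z = 0 → z.mapDomain f = 0 → z = 0) :
    (K.map f θ).HasFacesReading w where
  attach_mem j hj s := Finset.mem_image_of_mem f (hK.attach_mem j hj s)
  lab_attach j hj s := (h.lab_eq _).trans (hK.lab_attach j hj s)
  src_attach j hj s := (h.src_eq _).trans (congrArg θ (hK.src_attach j hj s))
  tgt_attach j hj s := (h.tgt_eq _).trans (congrArg θ (hK.tgt_attach j hj s))
  attach_injOn := hinj
  sum_faceBoundary_ne_zero J hJ hne h0 := by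
    refine hK.sum_faceBoundary_ne_zero J hJ hne (hf _ ?_ ?_)
    · rw [map_sum]
      exact Finset.sum_eq_zero fun j hj => hK.boundary_faceBoundary (hJ hj)
    · simpa [faceBoundary, LabelledComplex.map, Finsupp.mapDomain_finsetSum] using h0

theorem IsTupleComplex.map_of_isFoldPair [DecidableEq V] (hK : K.IsTupleComplex w π T)
    (h : K.IsFoldPair e' e'' Q' Q'') (hQ : Q' ≠ Q'') (he' : e' ∈ K.edges) (he'' : e'' ∈ K.edges)
    (hinj : ∀ s, Set.InjOn (fun j => Function.update id e'' e' (K.attach j s)) K.faces) :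
    (K.map (Function.update id e'' e') (Function.update id Q'' Q')).IsTupleComplex w π T where
  hasFacesReading := hK.hasFacesReading.map (h.isFoldMap he' he'') hinj
    fun _ => h.eq_zero_of_mapDomain_eq_zero hQ
  isMarkedBy := hK.isMarkedBy.map (h.isFoldMap he' he'')
  foldsToRose := hK.foldsToRose.map (h.isFoldMap he' he'')

end LabelledComplex

namespace LabelledComplex

variable {α X V I : Type*} {N : ℕ} {K : LabelledComplex α X V I N} {w : Fin N → α × Bool}

/-- Pairs of faces which cross a common pair of edges, possibly at different positions of `w`. -/
def PairLink (K : LabelledComplex α X V I N) (B D : I × I) : Prop :=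
  D.1 ∈ K.faces ∧ D.2 ∈ K.faces ∧
    ∃ s t, K.attach D.1 t = K.attach B.1 s ∧ K.attach D.2 t = K.attach B.2 s

variable [NeZero N]

namespace HasFacesReading

variable (hK : K.HasFacesReading w)
include hK

theorem rel_corner_iff {r : Setoid V} {E : Set X} (hr : K.FoldClosed E r) {B D : I}
    (hB : B ∈ K.faces) (hD : D ∈ K.faces) {s : Fin N} (hBs : K.attach B s ∈ E)
    (hDs : K.attach D s ∈ E) :
    r (K.corner B s) (K.corner D s) ↔ r (K.corner B (s + 1)) (K.corner D (s + 1)) := by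
  have h := hr _ hBs _ hDs (by rw [hK.lab_attach B hB, hK.lab_attach D hD])
  rw [hK.src_attach B hB, hK.src_attach D hD, hK.tgt_attach B hB, hK.tgt_attach D hD] at h
  cases hsign : (w s).2
  · simpa [hsign] using h.symm
  · simpa [hsign] using h

theorem rel_src_and_rel_tgt {r : Setoid V} {B D : I} (hB : B ∈ K.faces) (hD : D ∈ K.faces)
    (h : ∀ s, r (K.corner B s) (K.corner D s)) (s : Fin N) :
    r (K.src (K.attach B s)) (K.src (K.attach D s)) ∧
      r (K.tgt (K.attach B s)) (K.tgt (K.attach D s)) := by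
  rw [hK.src_attach B hB, hK.src_attach D hD, hK.tgt_attach B hB, hK.tgt_attach D hD]
  exact ⟨h _, h _⟩

theorem mem_faces_and_ne_of_pairLink {P P' : I × I} (h : Relation.ReflTransGen K.PairLink P P')
    (h₁ : P.1 ∈ K.faces) (h₂ : P.2 ∈ K.faces) (hne : P.1 ≠ P.2) :
    P'.1 ∈ K.faces ∧ P'.2 ∈ K.faces ∧ P'.1 ≠ P'.2 := by
  induction h with
  | refl => exact ⟨h₁, h₂, hne⟩
  | tail _ hlink ih =>
    obtain ⟨hD₁, hD₂, s, t, ht₁, ht₂⟩ := hlink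
    refine ⟨hD₁, hD₂, fun h_eq => ih.2.2 (hK.attach_injOn s ih.1 ih.2.1 ?_)⟩
    exact ht₁.symm.trans ((congrArg (K.attach · t) h_eq).trans ht₂)

theorem rel_corner_of_not_isFull (hw : IsQuadratic w) {e : X} (he : ¬ K.IsFull w e) {r : Setoid V}
    (hr : K.FoldClosed (K.edges \ {e}) r) {B D : I} (hB : B ∈ K.faces) (hD : D ∈ K.faces)
    {s₁ : Fin N} (h₁ : r (K.corner B s₁) (K.corner D s₁)) (s : Fin N) :
    r (K.corner B s) (K.corner D s) := by
  obtain ⟨s₀, hs₀⟩ := hK.exists_position hw he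
  have hmem {C : I} (hC : C ∈ K.faces) {s : Fin N} (hs : s ≠ s₀) :
      K.attach C s ∈ (K.edges : Set X) \ {e} :=
    ⟨hK.attach_mem C hC s, fun h => hs (hs₀ C hC s h)⟩
  exact forall_fin_of_iff_add_one (P := fun s => r (K.corner B s) (K.corner D s)) (s₀ := s₀)
    (fun s hs => hK.rel_corner_iff hr hB hD (hmem hB hs) (hmem hD hs)) h₁ s

theorem rel_corner_of_pairLink (hw : IsQuadratic w) {e : X} (he : ¬ K.IsFull w e) {r : Setoid V}
    (hr : K.FoldClosed (K.edges \ {e}) r) {P P' : I × I}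
    (h : Relation.ReflTransGen K.PairLink P P') (h₁ : P.1 ∈ K.faces) (h₂ : P.2 ∈ K.faces)
    {s₁ : Fin N} (hs₁ : K.corner P.1 s₁ = K.corner P.2 s₁) (s : Fin N) :
    r (K.corner P'.1 s) (K.corner P'.2 s) := by
  suffices P'.1 ∈ K.faces ∧ P'.2 ∈ K.faces ∧ ∀ s, r (K.corner P'.1 s) (K.corner P'.2 s) from
    this.2.2 s
  induction h with
  | refl =>
    exact ⟨h₁, h₂, hK.rel_corner_of_not_isFull hw he hr h₁ h₂ (s₁ := s₁) (hs₁ ▸ r.refl _)⟩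
  | @tail B D _ hlink ih =>
    obtain ⟨hD₁, hD₂, s, t, ht₁, ht₂⟩ := hlink
    have hrel := hK.rel_src_and_rel_tgt ih.1 ih.2.1 ih.2.2 s
    rw [← ht₁, ← ht₂, hK.src_attach _ hD₁, hK.src_attach _ hD₂] at hrel
    exact ⟨hD₁, hD₂, hK.rel_corner_of_not_isFull hw he hr hD₁ hD₂ hrel.1⟩

theorem isFull_attach (hfull : ∀ e ∈ K.edges, K.IsRedundant e → K.IsFull w e)
    {B D : I} (hB : B ∈ K.faces) (hD : D ∈ K.faces) (hne : B ≠ D)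
    (hrel : ∀ e, ¬ K.IsFull w e → ∀ r : Setoid V, K.FoldClosed (K.edges \ {e}) r →
      ∀ s, r (K.corner B s) (K.corner D s)) (s : Fin N) : K.IsFull w (K.attach B s) := by
  by_contra hnot
  refine hnot (hfull _ (hK.attach_mem B hB s) fun r hr => ⟨K.attach D s, ⟨hK.attach_mem D hD s, ?_⟩,
    ?_, hK.rel_src_and_rel_tgt hB hD (hrel _ hnot r hr) s⟩)
  · exact fun h => hne (hK.attach_injOn s hB hD h.symm)
  · rw [hK.lab_attach B hB, hK.lab_attach D hD]

/-- The sum over the members of `J` of their edges at position `s` depends only on the letter at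
`s`, so the total sum vanishes. -/
theorem eq_empty_of_exists_attach_eq (hw : IsQuadratic w) {J : Finset I} (hJ : J ⊆ K.faces)
    (hmove : ∀ B ∈ J, ∀ s t, (w s).1 = (w t).1 → ∃ D ∈ J, K.attach D t = K.attach B s) :
    J = ∅ := by
  classical
  by_contra hne
  refine hK.sum_faceBoundary_ne_zero J hJ (Finset.nonempty_iff_ne_empty.2 hne) ?_
  have hsub {s t} (hst : (w s).1 = (w t).1) : J.image (K.attach · s) ⊆ J.image (K.attach · t) := by
    intro x hx
    obtain ⟨B, hB, rfl⟩ := Finset.mem_image.1 hx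
    exact Finset.mem_image.2 (hmove B hB s t hst)
  calc ∑ j ∈ J, K.faceBoundary j
      = ∑ s, ∑ x ∈ J.image (K.attach · s), Finsupp.single x (1 : ZMod 2) := by
        simp only [faceBoundary]
        rw [Finset.sum_comm]
        exact Finset.sum_congr rfl fun s _ =>
          (Finset.sum_image (f := fun x => Finsupp.single x (1 : ZMod 2)) fun _ h _ h' =>
            hK.attach_injOn s (hJ h) (hJ h')).symm
    _ = 0 := hw.sum_eq_zero fun s t hst => by rw [(hsub hst).antisymm (hsub hst.symm)]

theorem eq_of_corner_eq (hw : IsQuadratic w)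
    (hfull : ∀ e ∈ K.edges, K.IsRedundant e → K.IsFull w e) {C D : I} (hC : C ∈ K.faces)
    (hD : D ∈ K.faces) {s₁ : Fin N} (hs₁ : K.corner C s₁ = K.corner D s₁) : C = D := by
  classical
  by_contra hne
  have hfull_fst {B B' : I} (h : Relation.ReflTransGen K.PairLink (C, D) (B, B')) (s : Fin N) :
      K.IsFull w (K.attach B s) ∧ K.IsFull w (K.attach B' s) := by
    obtain ⟨hB, hB', hBB'⟩ := hK.mem_faces_and_ne_of_pairLink h hC hD hne
    have hrel (e : X) (he : ¬ K.IsFull w e) (r : Setoid V)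
        (hr : K.FoldClosed (K.edges \ {e}) r) (s : Fin N) : r (K.corner B s) (K.corner B' s) :=
      hK.rel_corner_of_pairLink hw he hr h hC hD hs₁ s
    exact ⟨hK.isFull_attach hfull hB hB' hBB' hrel s, hK.isFull_attach hfull hB' hB hBB'.symm
      (fun e he r hr s => r.symm (hrel e he r hr s)) s⟩
  let J : Finset I := {B ∈ K.faces | ∃ B', Relation.ReflTransGen K.PairLink (C, D) (B, B')}
  have hJ : J = ∅ := by
    refine hK.eq_empty_of_exists_attach_eq hw (Finset.filter_subset _ _) fun B hB s t hst => ?_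
    obtain ⟨hB, B', hBB'⟩ := Finset.mem_filter.1 hB
    have hB' := (hK.mem_faces_and_ne_of_pairLink hBB' hC hD hne).2.1
    obtain ⟨E, hE, hEt⟩ := (hfull_fst hBB' s).1 t (by rw [hK.lab_attach B hB, hst])
    obtain ⟨E', hE', hEt'⟩ := (hfull_fst hBB' s).2 t (by rw [hK.lab_attach B' hB', hst])
    exact ⟨E, Finset.mem_filter.2 ⟨hE, E', hBB'.tail ⟨hE, hE', s, t, hEt, hEt'⟩⟩, hEt⟩
  exact Finset.notMem_empty C (hJ ▸ Finset.mem_filter.2 ⟨hC, D, .refl⟩)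

end HasFacesReading

end LabelledComplex

theorem eq_top_of_conj_of_mem {α : Type*} {H : Subgroup (FreeGroup α)} {c : FreeGroup α}
    (h : ∀ a, c * FreeGroup.of a * c⁻¹ ∈ H) : H = ⊤ := by
  refine Subgroup.comap_injective (f := (MulAut.conj c).toMonoidHom) (MulAut.conj c).surjective ?_
  rw [Subgroup.comap_top, eq_top_iff, ← FreeGroup.closure_range_of, Subgroup.closure_le]
  rintro _ ⟨a, rfl⟩
  exact h a

namespace LabelledComplex

variable {α X V I : Type*} {N : ℕ} {K : LabelledComplex α X V I N} {e' e'' : X}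

theorem isRedundant_of_ends_eq {e g : X} (hg : g ∈ K.edges) (hne : g ≠ e)
    (hlab : K.lab g = K.lab e) (hsrc : K.src g = K.src e) (htgt : K.tgt g = K.tgt e) :
    K.IsRedundant e :=
  fun r _ => ⟨g, ⟨hg, hne⟩, hlab, hsrc ▸ r.refl _, htgt ▸ r.refl _⟩

theorem exists_isFoldPair (hlab : K.lab e' = K.lab e'')
    (hshare : K.src e' = K.src e'' ∨ K.tgt e' = K.tgt e'')
    (hends : ¬ (K.src e' = K.src e'' ∧ K.tgt e' = K.tgt e'')) :
    ∃ Q' Q'', K.IsFoldPair e' e'' Q' Q'' ∧ Q' ≠ Q'' := by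
  obtain hsrc | htgt := hshare
  · exact ⟨_, _, ⟨hlab, .inl ⟨hsrc, rfl, rfl⟩⟩, fun htgt => hends ⟨hsrc, htgt⟩⟩
  · exact ⟨_, _, ⟨hlab, .inr ⟨htgt, rfl, rfl⟩⟩, fun hsrc => hends ⟨hsrc, htgt⟩⟩

variable [NeZero N] {w : Fin N → α × Bool} {G : Type*} [Group G] {π : FreeGroup α →* G} {n : ℕ}
  {T : Fin n → G}

theorem HasFacesReading.eq_of_src_eq_or_tgt_eq (hK : K.HasFacesReading w) (hw : IsQuadratic w)
    (hfull : ∀ e ∈ K.edges, K.IsRedundant e → K.IsFull w e) {C D : I} (hC : C ∈ K.faces)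
    (hD : D ∈ K.faces) {s : Fin N} (h : K.src (K.attach C s) = K.src (K.attach D s) ∨
      K.tgt (K.attach C s) = K.tgt (K.attach D s)) : C = D := by
  rw [hK.src_attach C hC, hK.src_attach D hD, hK.tgt_attach C hC, hK.tgt_attach D hD] at h
  exact h.elim (hK.eq_of_corner_eq hw hfull hC hD) (hK.eq_of_corner_eq hw hfull hC hD)

theorem HasFacesReading.not_ends_eq (hK : K.HasFacesReading w) (hw : IsQuadratic w)
    (hfull : ∀ e ∈ K.edges, K.IsRedundant e → K.IsFull w e) (he' : e' ∈ K.edges)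
    (he'' : e'' ∈ K.edges) (hne : e' ≠ e'') (hlab : K.lab e' = K.lab e'') :
    ¬ (K.src e' = K.src e'' ∧ K.tgt e' = K.tgt e'') := by
  rintro ⟨hsrc, htgt⟩
  obtain ⟨s, hs⟩ := hw.exists_letter_eq (K.lab e')
  obtain ⟨C, hC, hCs⟩ := hfull e' he'
    (isRedundant_of_ends_eq he'' hne.symm hlab.symm hsrc.symm htgt.symm) s hs
  obtain ⟨D, hD, hDs⟩ := hfull e'' he'' (isRedundant_of_ends_eq he' hne hlab hsrc htgt) s
    (hs.trans hlab)
  have hCD : C = D := hK.eq_of_src_eq_or_tgt_eq hw hfull hC hD (s := s) (.inl (by rwa [hCs, hDs]))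
  exact hne (hCs.symm.trans ((congrArg (K.attach · s) hCD).trans hDs))

theorem IsTupleComplex.exists_card_lt (hK : K.IsTupleComplex w π T) (hw : IsQuadratic w)
    (hπ : π (FreeGroup.mk (List.ofFn w)) = 1) (he' : e' ∈ K.edges) (he'' : e'' ∈ K.edges)
    (hne : e' ≠ e'') (hlab : K.lab e' = K.lab e'')
    (hshare : K.src e' = K.src e'' ∨ K.tgt e' = K.tgt e'') :
    ∃ K' : LabelledComplex α X V I N, K'.IsTupleComplex w π T ∧ K'.edges.card < K.edges.card := by
  classical
  have hface := hK.hasFacesReading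
  by_cases hfull : ∀ e ∈ K.edges, K.IsRedundant e → K.IsFull w e
  · obtain ⟨Q', Q'', hfold, hQ⟩ :=
      exists_isFoldPair hlab hshare (hface.not_ends_eq hw hfull he' he'' hne hlab)
    set f := Function.update id e'' e'
    have hf_share {x y : X} (hxy : f x = f y) : K.src x = K.src y ∨ K.tgt x = K.tgt y := by
      by_cases hx : x = e'' <;> by_cases hy : y = e''
      · exact .inl (by rw [hx, hy])
      · obtain rfl : e' = y := by simpa [f, hx, hy] using hxy
        exact hx ▸ hshare.imp Eq.symm Eq.symm
      · obtain rfl : x = e' := by simpa [f, hx, hy] using hxy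
        exact hy ▸ hshare
      · exact .inl (congrArg K.src (by simpa [f, hx, hy] using hxy))
    refine ⟨_, hK.map_of_isFoldPair hfold hQ he' he'' fun s C hC D hD hCD =>
      hface.eq_of_src_eq_or_tgt_eq hw hfull hC hD (hf_share hCD), ?_⟩
    refine (Finset.card_le_card (t := K.edges.erase e'') fun x hx => ?_).trans_lt
      (Finset.card_erase_lt_of_mem he'')
    obtain ⟨y, hy, rfl⟩ := Finset.mem_image.1 hx
    rcases eq_or_ne y e'' with rfl | hye
    · simpa [f] using ⟨hne, he'⟩
    · simpa [f, hye] using hy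
  · push Not at hfull
    obtain ⟨e, he, hred, hfree⟩ := hfull
    obtain ⟨J, hJ⟩ := hK.exists_erase hw hπ he hred hfree
    exact ⟨_, hJ, Finset.card_erase_lt_of_mem he⟩

theorem HasFacesReading.faces_eq_empty (hK : K.HasFacesReading w) (hw : IsQuadratic w)
    (hlab : Set.InjOn K.lab K.edges) : K.faces = ∅ := by
  refine Finset.eq_empty_of_forall_notMem fun j hj => ?_
  refine hK.sum_faceBoundary_ne_zero {j} (by simpa) (by simp) ?_
  rw [Finset.sum_singleton]
  refine hw.sum_eq_zero fun s t hst => ?_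
  rw [hlab (hK.attach_mem j hj s) (hK.attach_mem j hj t)
    (by rw [hK.lab_attach j hj, hK.lab_attach j hj, hst])]

/-- When no fold is possible the graph is a rose whose petals are the generators, and the marking
tuple is the required lift. -/
theorem IsTupleComplex.exists_lift_of_folded (hK : K.IsTupleComplex w π T) (hw : IsQuadratic w)
    (hfolded : ∀ e' ∈ K.edges, ∀ e'' ∈ K.edges, K.lab e' = K.lab e'' →
      K.src e' = K.src e'' ∨ K.tgt e' = K.tgt e'' → e' = e'') :
    ∃ S : Fin n → FreeGroup α, (∀ i, π (S i) = T i) ∧ Subgroup.closure (Set.range S) = ⊤ := by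
  have hvertex : ∀ e ∈ K.edges, ∀ f ∈ K.edges, K.src e = K.src f ∧ K.src e = K.tgt f :=
    hK.foldsToRose.rel_of_foldClosed ⊥ fun e he f hf hef =>
      ⟨fun h => congrArg K.tgt (hfolded e he f hf hef (.inl h)),
        fun h => congrArg K.src (hfolded e he f hf hef (.inr h))⟩
  have hfaces := hK.hasFacesReading.faces_eq_empty hw fun e he f hf hef =>
    hfolded e he f hf hef (.inl (hvertex e he f hf).1)
  obtain ⟨S, hS, q, hq⟩ := hK.isMarkedBy
  simp only [markedSubgroup, hfaces, Finset.coe_empty, Set.image_empty,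
    Subgroup.normalClosure_empty, sup_bot_eq] at hq
  obtain ⟨e₀, he₀, -⟩ := hK.foldsToRose.exists_lab_eq (w 0).1
  refine ⟨FreeGroup.map K.lab ∘ S, hS,
    eq_top_of_conj_of_mem (c := FreeGroup.map K.lab (q (K.src e₀))) fun a => ?_⟩
  obtain ⟨e, he, rfl⟩ := hK.foldsToRose.exists_lab_eq a
  have h := Subgroup.mem_map_of_mem (FreeGroup.map K.lab) (hq e he)
  rw [← (hvertex e₀ he₀ e he).1, ← (hvertex e₀ he₀ e he).2, MonoidHom.map_closure,
    ← Set.range_comp] at h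
  simpa using h

theorem IsTupleComplex.exists_lift (hK : K.IsTupleComplex w π T) (hw : IsQuadratic w)
    (hπ : π (FreeGroup.mk (List.ofFn w)) = 1) :
    ∃ S : Fin n → FreeGroup α, (∀ i, π (S i) = T i) ∧ Subgroup.closure (Set.range S) = ⊤ := by
  induction hcard : K.edges.card using Nat.strong_induction_on generalizing K with
  | _ c ih =>
    by_cases hfolded : ∀ e' ∈ K.edges, ∀ e'' ∈ K.edges, K.lab e' = K.lab e'' →
      K.src e' = K.src e'' ∨ K.tgt e' = K.tgt e'' → e' = e''
    · exact hK.exists_lift_of_folded hw hfolded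
    · push Not at hfolded
      obtain ⟨e', he', e'', he'', hlab, hshare, hne⟩ := hfolded
      obtain ⟨K', hK', hlt⟩ := hK.exists_card_lt hw hπ he' he'' hne hlab hshare
      exact ih _ (hcard ▸ hlt) hK' rfl

end LabelledComplex

/-! ### Lifting generating tuples -/

theorem exists_finset_closure_union_image_eq_top {H ι : Type*} [Group H] [Group.FG H] {s : Set H}
    {f : ι → H} (h : Subgroup.closure (s ∪ Set.range f) = ⊤) :
    ∃ J : Finset ι, Subgroup.closure (s ∪ f '' J) = ⊤ := by
  classical
  have hmono : Monotone fun J : Finset ι => Subgroup.closure (s ∪ f '' J) := fun J J' hJ =>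
    Subgroup.closure_mono (Set.union_subset_union_right s (Set.image_mono hJ))
  have hsup : ⨆ J : Finset ι, Subgroup.closure (s ∪ f '' J) = ⊤ := by
    rw [← Subgroup.closure_iUnion, eq_top_iff, ← h]
    refine Subgroup.closure_mono (Set.union_subset (fun x hx => ?_) ?_)
    · exact Set.mem_iUnion.2 ⟨∅, .inl hx⟩
    · rintro _ ⟨i, rfl⟩
      exact Set.mem_iUnion.2 ⟨{i}, by simp⟩
  have hmem (x : H) : ∃ J : Finset ι, x ∈ Subgroup.closure (s ∪ f '' J) :=
    (Subgroup.mem_iSup_of_directed hmono.directed_le).1 (hsup ▸ Subgroup.mem_top x)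
  choose J hJ using hmem
  obtain ⟨Z, hZ⟩ := Group.fg_def.1 (inferInstance : Group.FG H)
  refine ⟨Z.biUnion J, ?_⟩
  rw [eq_top_iff, ← hZ, Subgroup.closure_le]
  exact fun z hz => hmono (Finset.subset_biUnion_of_mem J hz) (hJ z)

theorem normalClosure_singleton {H : Type*} [Group H] (W : H) :
    Subgroup.normalClosure {W} = Subgroup.closure (Set.range fun g => g * W * g⁻¹) := by
  rw [Subgroup.normalClosure]
  congr 1
  ext x
  simp [Group.mem_conjugatesOfSet_iff, isConj_iff]

theorem exists_conjugates_closure_eq_top {F G : Type*} [Group F] [Group.FG F] [Group G]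
    {π : F →* G} {W : F} (hker : π.ker = Subgroup.normalClosure {W}) {s : Set F}
    (hs : Subgroup.closure (π '' s) = ⊤) :
    ∃ J : Finset F, Subgroup.closure (s ∪ (fun g => g * W * g⁻¹) '' J) = ⊤ := by
  refine exists_finset_closure_union_image_eq_top ?_
  rw [Subgroup.closure_union, ← normalClosure_singleton, ← hker, ← Subgroup.comap_map_eq,
    MonoidHom.map_closure, hs, Subgroup.comap_top]

theorem smul_prod_ofFn_of_cyclic {M β : Type*} [Monoid M] [MulAction M β] {N : ℕ} [NeZero N]
    {f : Fin N → M} {c : Fin N → β} (h : ∀ s, f s • c (s + 1) = c s) :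
    (List.ofFn f).prod • c 0 = c 0 := by
  have path : ∀ (N : ℕ) (f : Fin N → M) (c : Fin (N + 1) → β),
      (∀ s, f s • c s.succ = c s.castSucc) → (List.ofFn f).prod • c (Fin.last N) = c 0 := by
    intro N
    induction N with
    | zero => simp
    | succ N ih =>
      intro f c hc
      rw [List.ofFn_succ, List.prod_cons, mul_smul]
      exact (congrArg (f 0 • ·) (ih _ (c ∘ Fin.succ) fun s => hc s.succ)).trans (hc 0)
  obtain ⟨m, rfl⟩ := Nat.exists_eq_succ_of_ne_zero (NeZero.ne N)
  refine (congrArg _ ?_).trans ((path _ f (Fin.snoc c (c 0)) fun s => ?_).trans ?_)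
  · simp
  · rw [Fin.snoc_castSucc, ← h s]
    congr 1
    cases s using Fin.lastCases with
    | last => simp
    | cast s => rw [Fin.succ_castSucc, Fin.snoc_castSucc, Fin.coeSucc_eq_succ]
  · exact Fin.snoc_castSucc (α := fun _ => β) (c 0) c 0

theorem exists_cyclic_partialProd {H : Type*} [Group H] {N : ℕ} [NeZero N] (g : H) (f : Fin N → H) :
    ∃ c : Fin N → H, c 0 = g ∧
      ∀ s, c s * f s * (c (s + 1))⁻¹ ∈ ({1, g * (List.ofFn f).prod * g⁻¹} : Set H) := by
  obtain ⟨m, rfl⟩ := Nat.exists_eq_succ_of_ne_zero (NeZero.ne N)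
  refine ⟨fun s => g * Fin.partialProd f s.castSucc, by simp, fun s => ?_⟩
  dsimp only
  rw [mul_assoc g (Fin.partialProd f _), ← Fin.partialProd_succ]
  cases s using Fin.lastCases with
  | last => exact .inr (by simp [Fin.partialProd, List.take_of_length_le])
  | cast s => exact .inl (by rw [Fin.succ_castSucc, Fin.coeSucc_eq_succ, mul_inv_cancel])

theorem exists_freeGroup_cocycle {α H : Type*} [Group H] (t : FreeGroup α → α → H) :
    ∃ τ : FreeGroup α → H, τ 1 = 1 ∧ ∀ y a, τ (y * FreeGroup.of a) = τ y * t y a := by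
  obtain ⟨P, hP_one, hP⟩ : ∃ P : FreeGroup α → FreeGroup α × H, P 1 = 1 ∧
      ∀ y a, P (y * FreeGroup.of a) = ((P y).1 * FreeGroup.of a, (P y).2 * t (P y).1 a) := by
    let E (a : α) : Equiv.Perm (FreeGroup α × H) :=
      Equiv.prodShear (Equiv.mulRight (FreeGroup.of a)) fun y => Equiv.mulRight (t y a)
    let Φ : FreeGroup α →* Equiv.Perm (FreeGroup α × H) := FreeGroup.lift fun a => (E a)⁻¹
    exact ⟨fun y => (Φ y)⁻¹ 1, by simp, fun y a => by simp [Φ, E]⟩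
  have hfst (y : FreeGroup α) : (P y).1 = y := by
    induction y using freeGroup_induction_mul_of_iff with
    | one => simp [hP_one]
    | mul_of y a => simp [hP]
  exact ⟨fun y => (P y).2, by simp [hP_one], fun y a => by simp [hP, hfst]⟩

theorem freeGroup_mk_ofFn {α : Type*} {N : ℕ} (w : Fin N → α × Bool) :
    FreeGroup.mk (List.ofFn w) = (List.ofFn fun s => FreeGroup.mk [w s]).prod := by
  have h (L : List (α × Bool)) : FreeGroup.mk L = (L.map fun x => FreeGroup.mk [x]).prod := by
    induction L with
    | nil => rfl
    | cons x L ih =>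
      rw [List.map_cons, List.prod_cons, ← ih, FreeGroup.mul_mk, List.singleton_append]
  rw [h, List.map_ofFn, Function.comp_def]

namespace LabelledComplex

section Quotient

variable {α X V I : Type*} {N : ℕ} {K : LabelledComplex α X V I N}

variable (K) in
/-- The map `pt` from the vertices to a set on which the free group acts through `ψ` is compatible
with the edges: a label carries the image of the target of an edge to the image of its source. -/
def IsEquivariant {β : Type*} (ψ : FreeGroup α →* Equiv.Perm β) (pt : V → β) : Prop :=
  ∀ e ∈ K.edges, ψ (FreeGroup.of (K.lab e)) (pt (K.tgt e)) = pt (K.src e)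

theorem FoldClosed.exists_isEquivariant {r : Setoid V} (hr : K.FoldClosed K.edges r) :
    ∃ ψ, K.IsEquivariant ψ (Quotient.mk r) := by
  let R (a : α) (x y : Quotient r) : Prop :=
    ∃ e ∈ K.edges, K.lab e = a ∧ Quotient.mk r (K.tgt e) = x ∧ Quotient.mk r (K.src e) = y
  have hR (a : α) : Relator.BiUnique (R a) := by
    constructor
    · rintro _ _ _ ⟨e, he, rfl, rfl, rfl⟩ ⟨f, hf, hef, rfl, h⟩
      exact Quotient.sound ((hr e he f hf hef.symm).1 (Quotient.exact h.symm))
    · rintro _ _ _ ⟨e, he, rfl, rfl, rfl⟩ ⟨f, hf, hef, h, rfl⟩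
      exact Quotient.sound ((hr e he f hf hef.symm).2 (Quotient.exact h.symm))
  have hfin (a : α) : {x | ∃ y, R a x y}.Finite := by
    refine (K.edges.finite_toSet.image fun e => Quotient.mk r (K.tgt e)).subset ?_
    rintro _ ⟨_, e, he, -, rfl, -⟩
    exact ⟨e, he, rfl⟩
  obtain ⟨ψ, hψ⟩ := exists_freeGroup_hom_perm hR hfin
  exact ⟨ψ, fun e he => hψ _ _ _ ⟨e, he, rfl, rfl, rfl⟩⟩

variable [NeZero N] {w : Fin N → α × Bool} {β : Type*} {ψ : FreeGroup α →* Equiv.Perm β}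
  {pt : V → β} {j : I}

theorem HasFacesReading.hom_letter_apply_corner (hK : K.HasFacesReading w)
    (hψ : K.IsEquivariant ψ pt) (hj : j ∈ K.faces) (s : Fin N) :
    ψ (FreeGroup.mk [w s]) (pt (K.corner j (s + 1))) = pt (K.corner j s) := by
  have h := hψ _ (hK.attach_mem j hj s)
  rw [hK.lab_attach j hj, hK.src_attach j hj, hK.tgt_attach j hj] at h
  rcases hs : w s with ⟨a, _ | _⟩ <;> simp only [hs, cond_true, cond_false] at h
  · rw [freeGroup_mk_singleton, cond_false, map_inv, ← h, Equiv.Perm.inv_def,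
      Equiv.symm_apply_apply]
  · exact h

theorem HasFacesReading.hom_word_apply_corner (hK : K.HasFacesReading w)
    (hψ : K.IsEquivariant ψ pt) (hj : j ∈ K.faces) :
    ψ (FreeGroup.mk (List.ofFn w)) (pt (K.corner j 0)) = pt (K.corner j 0) := by
  have h := smul_prod_ofFn_of_cyclic (c := fun s => pt (K.corner j s))
    (f := fun s => ψ (FreeGroup.mk [w s])) (hK.hom_letter_apply_corner hψ hj)
  rwa [freeGroup_mk_ofFn, map_list_prod, List.map_ofFn]

end Quotient

section Initial

variable {α : Type*} [Fintype α] {N n : ℕ} [NeZero N] (w : Fin N → α × Bool)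
  (S : Fin n → FreeGroup α) (J Y : Finset (FreeGroup α))

/-- The part of the Cayley graph of the free group spanned by the edges starting in `Y`, together
with an edge from `S i * (of (w 0).1)⁻¹` to `1` labelled `(w 0).1` for every `i`, which closes a
loop reading `S i`, and a disc with boundary `w` glued to every vertex in `J`. A vertex `y` of the
Cayley graph is encoded as `(y, 0)`, and `(g, s)` is the corner number `s` of the disc at `g`. -/
@[simps]
def initialComplex : LabelledComplex α ((FreeGroup α × α) ⊕ Fin n ⊕ FreeGroup α × Fin N)
    (FreeGroup α × Fin N) (FreeGroup α) N where
  edges := (Y ×ˢ .univ).disjSum (Finset.univ.disjSum (J ×ˢ .univ))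
  faces := J
  lab
    | .inl (_, a) => a
    | .inr (.inl _) => (w 0).1
    | .inr (.inr (_, s)) => (w s).1
  src
    | .inl (y, _) => (y, 0)
    | .inr (.inl i) => (S i * (FreeGroup.of (w 0).1)⁻¹, 0)
    | .inr (.inr (g, s)) => (g, bif (w s).2 then s else s + 1)
  tgt
    | .inl (y, a) => (y * FreeGroup.of a, 0)
    | .inr (.inl _) => (1, 0)
    | .inr (.inr (g, s)) => (g, bif (w s).2 then s + 1 else s)
  attach g s := .inr (.inr (g, s))
  corner := Prod.mk

variable {w S J Y}

theorem initialComplex_forall_edges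
    {P : (FreeGroup α × α) ⊕ Fin n ⊕ FreeGroup α × Fin N → Prop}
    (tree : ∀ y ∈ Y, ∀ a, P (.inl (y, a))) (gen : ∀ i, P (.inr (.inl i)))
    (cell : ∀ g ∈ J, ∀ s, P (.inr (.inr (g, s)))) : ∀ e ∈ (initialComplex w S J Y).edges, P e := by
  rintro (⟨y, a⟩ | i | ⟨g, s⟩) he
  · exact tree y (by simpa using he) a
  · exact gen i
  · exact cell g (by simpa using he) s

theorem initialComplex_hasFacesReading : (initialComplex w S J Y).HasFacesReading w where
  attach_mem g hg s := by simpa using hg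
  lab_attach _ _ _ := rfl
  src_attach _ _ _ := rfl
  tgt_attach _ _ _ := rfl
  attach_injOn s g _ h _ hgh := by simpa using hgh
  sum_faceBoundary_ne_zero J' _ := by
    rintro ⟨g, hg⟩ h
    have hcoeff := DFunLike.congr_fun h (.inr (.inr (g, 0)))
    simp only [faceBoundary, initialComplex_attach, Finsupp.finsetSum_apply] at hcoeff
    rw [Finset.sum_eq_single_of_mem g hg fun j _ hj => by simp [hj],
      Fintype.sum_eq_single 0 fun s hs => by simp [hs], Finsupp.single_eq_same] at hcoeff
    exact one_ne_zero hcoeff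

theorem initialComplex_isMarkedBy {G : Type*} [Group G] {π : FreeGroup α →* G} {T : Fin n → G}
    (hS : ∀ i, π (S i) = T i) : (initialComplex w S J Y).IsMarkedBy w π T := by
  obtain ⟨τ, hτ_one, hτ⟩ := exists_freeGroup_cocycle fun (y : FreeGroup α) (a : α) =>
    FreeGroup.of (.inl (y, a) : (FreeGroup α × α) ⊕ Fin n ⊕ FreeGroup α × Fin N)
  have hlab (y : FreeGroup α) : FreeGroup.map (initialComplex w S J Y).lab (τ y) = y := by
    induction y using freeGroup_induction_mul_of_iff with
    | one => simp [hτ_one]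
    | mul_of y a => simp [hτ]
  choose q hq_zero hq using fun g => exists_cyclic_partialProd (τ g) fun s =>
    FreeGroup.mk [((initialComplex w S J Y).attach g s, (w s).2)]
  simp only [← freeGroup_mk_ofFn] at hq
  let R (i : Fin n) := τ (S i * (FreeGroup.of (w 0).1)⁻¹) * FreeGroup.of (.inr (.inl i))
  have hlabR (i : Fin n) : FreeGroup.map (initialComplex w S J Y).lab (R i) = S i := by
    rw [map_mul, hlab, FreeGroup.map.of]
    exact inv_mul_cancel_right _ _
  refine ⟨R, fun i => by rw [hlabR, hS], fun v => q v.1 v.2,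
    initialComplex_forall_edges (fun y _ a => ?_) (fun i => ?_) fun g hg s => ?_⟩
  · simp [hq_zero, hτ, one_mem]
  · have hgen : R i ∈ (initialComplex w S J Y).markedSubgroup w R :=
      Subgroup.mem_sup_left (Subgroup.subset_closure ⟨i, rfl⟩)
    simpa [hq_zero, hτ_one] using hgen
  · have hmem : q g s * FreeGroup.mk [(.inr (.inr (g, s)), (w s).2)] * (q g (s + 1))⁻¹ ∈
        (initialComplex w S J Y).markedSubgroup w R := by
      have hface : (initialComplex w S J Y).faceWord w g ∈
          Subgroup.normalClosure ((initialComplex w S J Y).faceWord w '' J) :=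
        Subgroup.subset_normalClosure (Set.mem_image_of_mem _ hg)
      obtain h | h := hq g s
      · exact h ▸ one_mem _
      · exact h ▸ Subgroup.mem_sup_right (Subgroup.normalClosure_normal.conj_mem _ hface (τ g))
    cases hs : (w s).2 <;> rw [hs, freeGroup_mk_singleton] at hmem
    · have hinv := inv_mem hmem
      rw [mul_inv_rev, mul_inv_rev, inv_inv, ← mul_assoc] at hinv
      simpa [hs] using hinv
    · simpa [hs] using hmem

section Rose

variable {β : Type*} {ψ : FreeGroup α →* Equiv.Perm β} {pt : FreeGroup α × Fin N → β}

theorem initialComplex_hom_apply_vertex (hY : IsCayleyConnected (Y : Set (FreeGroup α)))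
    (hψ : (initialComplex w S J Y).IsEquivariant ψ pt)
    {y : FreeGroup α} (hy : y ∈ Y) : ψ y (pt (y, 0)) = pt (1, 0) :=
  (hY y hy).apply_eq (pt := fun y => pt (y, 0))
    fun x a hx _ => hψ (.inl (x, a)) (by simpa using hx)

theorem initialComplex_hom_apply_base (hY : IsCayleyConnected (Y : Set (FreeGroup α)))
    (hJY : J ⊆ Y) (hSY : ∀ i, S i * (FreeGroup.of (w 0).1)⁻¹ ∈ Y)
    (hgen : Subgroup.closure
      (Set.range S ∪ (fun g => g * FreeGroup.mk (List.ofFn w) * g⁻¹) '' J) = ⊤)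
    (hψ : (initialComplex w S J Y).IsEquivariant ψ pt)
    (x : FreeGroup α) : ψ x (pt (1, 0)) = pt (1, 0) := by
  let stab := (MulAction.stabilizer (Equiv.Perm β) (pt (1, 0))).comap ψ
  suffices hstab : stab = ⊤ from (hstab.ge (Subgroup.mem_top x) :)
  rw [eq_top_iff, ← hgen, Subgroup.closure_le]
  rintro _ (⟨i, rfl⟩ | ⟨g, hg, rfl⟩) <;> change ψ _ (pt (1, 0)) = pt (1, 0)
  · have hedge : ψ (FreeGroup.of (w 0).1) (pt (1, 0)) =
        pt (S i * (FreeGroup.of (w 0).1)⁻¹, 0) := hψ (.inr (.inl i)) (by simp)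
    have h := initialComplex_hom_apply_vertex hY hψ (hSY i)
    rwa [← hedge, ← Equiv.Perm.mul_apply, ← map_mul, inv_mul_cancel_right] at h
  · have hword : ψ (FreeGroup.mk (List.ofFn w)) (pt (g, 0)) = pt (g, 0) :=
      initialComplex_hasFacesReading.hom_word_apply_corner hψ hg
    have hvertex := initialComplex_hom_apply_vertex hY hψ (hJY hg)
    rw [← hvertex, ← Equiv.Perm.mul_apply, ← map_mul, inv_mul_cancel_right, map_mul,
      Equiv.Perm.mul_apply, hword]

theorem initialComplex_apply_eq_base (hY : IsCayleyConnected (Y : Set (FreeGroup α)))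
    (hJY : J ⊆ Y) (hψ : (initialComplex w S J Y).IsEquivariant ψ pt)
    (hbase : ∀ x, ψ x (pt (1, 0)) = pt (1, 0)) :
    ∀ e ∈ (initialComplex w S J Y).edges,
      pt ((initialComplex w S J Y).src e) = pt (1, 0) ∧
        pt ((initialComplex w S J Y).tgt e) = pt (1, 0) := by
  have heq {x : FreeGroup α} {b : β} : ψ x b = pt (1, 0) ↔ b = pt (1, 0) := by
    simpa [hbase] using (ψ x).injective.eq_iff (a := b) (b := pt (1, 0))
  have hvertex {y : FreeGroup α} (hy : y ∈ Y) : pt (y, 0) = pt (1, 0) :=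
    heq.1 (initialComplex_hom_apply_vertex hY hψ hy)
  suffices hsrc : ∀ e ∈ (initialComplex w S J Y).edges,
      pt ((initialComplex w S J Y).src e) = pt (1, 0) from
    fun e he => ⟨hsrc e he, heq.1 ((hψ e he).trans (hsrc e he))⟩
  refine initialComplex_forall_edges (fun y hy _ => hvertex hy) (fun i => ?_) fun g hg s => ?_
  · exact (hψ (.inr (.inl i)) (by simp)).symm.trans (hbase _)
  · have hcorner : ∀ s, pt (g, s) = pt (1, 0) := by
      refine forall_fin_of_iff_add_one (s₀ := 0) (s₁ := 0) (fun s _ => ?_) (hvertex (hJY hg))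
      have h : ψ (FreeGroup.mk [w s]) (pt (g, s + 1)) = pt (g, s) :=
        initialComplex_hasFacesReading.hom_letter_apply_corner hψ hg s
      rw [← h, heq]
    exact hcorner _

end Rose

theorem initialComplex_foldsToRose (hone : 1 ∈ Y) (hY : IsCayleyConnected (Y : Set (FreeGroup α)))
    (hJY : J ⊆ Y) (hSY : ∀ i, S i * (FreeGroup.of (w 0).1)⁻¹ ∈ Y)
    (hgen : Subgroup.closure
      (Set.range S ∪ (fun g => g * FreeGroup.mk (List.ofFn w) * g⁻¹) '' J) = ⊤) :
    (initialComplex w S J Y).FoldsToRose where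
  rel_of_foldClosed r hr := by
    obtain ⟨ψ, hψ⟩ := hr.exists_isEquivariant
    have hpt := initialComplex_apply_eq_base hY hJY hψ
      (initialComplex_hom_apply_base hY hJY hSY hgen hψ)
    exact fun e he f hf => ⟨Quotient.exact ((hpt e he).1.trans (hpt f hf).1.symm),
      Quotient.exact ((hpt e he).1.trans (hpt f hf).2.symm)⟩
  exists_lab_eq a := ⟨.inl (1, a), by simpa using hone, rfl⟩

end Initial

end LabelledComplex

theorem IsQuadratic.exists_lift {α G : Type*} [Group G] {N n : ℕ} {w : Fin N → α × Bool}
    (hw : IsQuadratic w) {π : FreeGroup α →* G} (hπ : Function.Surjective π)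
    (hker : π.ker = Subgroup.normalClosure {FreeGroup.mk (List.ofFn w)}) {T : Fin n → G}
    (hT : Subgroup.closure (Set.range T) = ⊤) :
    ∃ S : Fin n → FreeGroup α, (∀ i, π (S i) = T i) ∧ Subgroup.closure (Set.range S) = ⊤ := by
  classical
  choose S hS using fun i => hπ (T i)
  have : Fintype α := Fintype.ofSurjective (fun s => (w s).1) hw.exists_letter_eq
  obtain rfl | hN := Nat.eq_zero_or_pos N
  · have : IsEmpty α := ⟨fun a => (hw.exists_letter_eq a).choose.elim0⟩
    exact ⟨S, hS, Subsingleton.elim _ _⟩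
  have : NeZero N := ⟨hN.ne'⟩
  obtain ⟨J, hJ⟩ := exists_conjugates_closure_eq_top hker (s := Set.range S) (by
    rwa [← Set.range_comp, show π ∘ S = T from funext hS])
  obtain ⟨Y, hYsub, hY⟩ := IsCayleyConnected.exists_finset_superset
    (insert 1 (J ∪ Finset.univ.image fun i => S i * (FreeGroup.of (w 0).1)⁻¹))
  simp only [Finset.insert_subset_iff, Finset.union_subset_iff, Finset.image_subset_iff,
    Finset.mem_univ, forall_const] at hYsub
  obtain ⟨hone, hJY, hSY⟩ := hYsub
  have hK : (LabelledComplex.initialComplex w S J Y).IsTupleComplex w π T :=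
    ⟨LabelledComplex.initialComplex_hasFacesReading,
      LabelledComplex.initialComplex_isMarkedBy hS,
      LabelledComplex.initialComplex_foldsToRose hone hY hJY hSY hJ⟩
  refine hK.exists_lift hw (MonoidHom.mem_ker.1 ?_)
  exact hker ▸ Subgroup.subset_normalClosure rfl

/-! ### Surface groups -/

theorem IsQuadratic.le_and_nielsenEquiv {p N n : ℕ} {w : Fin N → Fin p × Bool}
    (hw : IsQuadratic w)
    {T : Fin n → PresentedGroup ({FreeGroup.mk (List.ofFn w)} : Set (FreeGroup (Fin p)))}
    (hT : Subgroup.closure (Set.range T) = ⊤) :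
    p ≤ n ∧ NielsenEquiv T (fun i =>
      if h : (i : ℕ) < p then PresentedGroup.of (⟨(i : ℕ), h⟩ : Fin p) else 1) := by
  obtain ⟨S, hS, hgen⟩ := hw.exists_lift (PresentedGroup.mk_surjective _)
    (QuotientGroup.ker_mk' _) hT
  obtain ⟨hpn, hequiv⟩ := le_and_nielsenEquiv_paddedBasis hgen
  refine ⟨hpn, ?_⟩
  convert hequiv.map (PresentedGroup.mk _) using 1
  · exact (funext hS).symm
  · ext i
    rw [Function.comp_apply, paddedBasis, apply_dite (PresentedGroup.mk _), map_one]
    rfl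

theorem nielsen_nonorientable_surface_group_general {p N n : ℕ} {w : Fin N → Fin p × Bool}
    (hw : IsQuadratic w) :
    (∀ T : Fin n → PresentedGroup ({FreeGroup.mk (List.ofFn w)} : Set (FreeGroup (Fin p))),
      Subgroup.closure (Set.range T) = ⊤ →
        p ≤ n ∧
        NielsenEquiv T (fun i =>
          if h : (i : ℕ) < p then PresentedGroup.of (⟨(i : ℕ), h⟩ : Fin p) else 1)) ∧
    (∀ T T' : Fin n → PresentedGroup ({FreeGroup.mk (List.ofFn w)} : Set (FreeGroup (Fin p))),
      Subgroup.closure (Set.range T) = ⊤ → Subgroup.closure (Set.range T') = ⊤ →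
        NielsenEquiv T T') :=
  ⟨fun _ hT => hw.le_and_nielsenEquiv hT, fun _ _ hT hT' =>
    (hw.le_and_nielsenEquiv hT).2.trans (hw.le_and_nielsenEquiv hT').2.symm⟩

theorem ncard_setOf_divNat_eq {m n : ℕ} (a : Fin m) :
    {s : Fin (m * n) | s.divNat = a}.ncard = n := by
  have hfiber : {s : Fin (m * n) | s.divNat = a} = Set.range (finProdFinEquiv ∘ Prod.mk a) := by
    ext s
    constructor
    · rintro rfl
      exact ⟨s.modNat, finProdFinEquiv.apply_symm_apply s⟩
    · rintro ⟨t, rfl⟩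
      exact congrArg Prod.fst (finProdFinEquiv.symm_apply_apply (a, t))
  rw [hfiber, ← Set.image_univ, Set.ncard_image_of_injective _
    (finProdFinEquiv.injective.comp (Prod.mk_right_injective a)), Set.ncard_univ, Nat.card_fin]

theorem nonorientableSurfaceRelator_eq_mk (p : ℕ) : nonorientableSurfaceRelator p =
    FreeGroup.mk (List.ofFn fun s : Fin (p * 2) => (s.divNat, true)) := by
  have hdiv (j : Fin p) (t : Fin 2) (h : (j * 2 + t : ℕ) < p * 2) :
      (⟨j * 2 + t, h⟩ : Fin (p * 2)).divNat = j := by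
    ext
    simp only [Fin.divNat]
    omega
  rw [freeGroup_mk_ofFn, List.ofFn_mul, List.prod_flatten, List.map_ofFn]
  simp only [nonorientableSurfaceRelator, Function.comp_def, hdiv, List.ofFn_const,
    List.prod_replicate, freeGroup_mk_singleton, cond_true]

/-- **Louder's theorem (non-orientable case).** Every generating `n`-tuple of the
fundamental group `⟨a₁,…,a_p ∣ a₁²a₂²⋯a_p²⟩` of the closed non-orientable surface of
genus `p ≥ 2` satisfies `n ≥ p` and is Nielsen equivalent to `(a₁,…,a_p,1,…,1)`.
In particular, any two generating `n`-tuples are Nielsen equivalent. -/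
theorem nielsen_nonorientable_surface_group (p : ℕ) (hp : 2 ≤ p) {n : ℕ} :
    (∀ T : Fin n → PresentedGroup ({nonorientableSurfaceRelator p} : Set (FreeGroup (Fin p))),
      Subgroup.closure (Set.range T) = ⊤ →
        p ≤ n ∧
        NielsenEquiv T (fun i =>
          if h : (i : ℕ) < p then PresentedGroup.of (⟨(i : ℕ), h⟩ : Fin p) else 1)) ∧
    (∀ T T' : Fin n → PresentedGroup ({nonorientableSurfaceRelator p} : Set (FreeGroup (Fin p))),
      Subgroup.closure (Set.range T) = ⊤ → Subgroup.closure (Set.range T') = ⊤ →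
        NielsenEquiv T T') := by
  rw [nonorientableSurfaceRelator_eq_mk]
  exact nielsen_nonorientable_surface_group_general ncard_setOf_divNat_eq
end

section
/- Let A and B be finitely generated groups and let G = A ∗ B be their free product. Then rk(G) = rk(A) + rk(B), where rk(H) denotes the rank of a finitely generated group H, i.e. the smallest number of elements in a generating set of H. -/
/-!
A group `G` is generated by `n` elements iff the one-point `G`-set is presented by one generator
and `n` relations `g • x = x`. For `G = A ∗ B`, splitting a label into letters from the two factors
costs one new generator per new relation, so a generating `n`-tuple of `A ∗ B` yields a presentation
of the point by a finite set `E` of generators and `n + |E| - 1` relations, each labelled in `A` or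
in `B`.

If `E` has more than one element, then the `A`-relations or the `B`-relations alone force two
generators `e ≠ e'` to coincide: otherwise `E` embeds into both an `A`-set and a `B`-set satisfying
the relations, and gluing these along `E` gives an `A ∗ B`-set satisfying all of them in which the
generators stay distinct. Say `A` forces `e = e'`. Some `A`-relation then expresses `e` through
another generator; using it to eliminate `e` from the `A`-relations, and replacing `e` by `e'` in
the `B`-relations, removes one generator and one relation. Once a single generator is left, the
labels of the `A`-relations generate `A` and those of the `B`-relations generate `B`.
-/

open Equiv
open Monoid.Coprod (inl inr)
open scoped Monoid.Coprod

universe w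

/-- The formal relation `label • src = tgt` between generators of a `G`-set; equivalently, an edge
of a `G`-labelled directed graph on `E`. -/
structure ActionRelation (E G : Type*) where
  src : E
  label : G
  tgt : E

namespace ActionRelation

variable {E F G H X : Type*} [Group G] [Group H]

/-- Pushforward of a relation along a map of generators and a homomorphism of groups. -/
def map (i : E → F) (j : G →* H) (t : ActionRelation E G) : ActionRelation F H :=
  ⟨i t.src, j t.label, i t.tgt⟩

/-- The relation obtained by substituting `δ e • e` for every generator `e`. -/
def twist (δ : E → G) (t : ActionRelation E G) : ActionRelation E G :=
  ⟨t.src, (δ t.tgt)⁻¹ * t.label * δ t.src, t.tgt⟩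

/-- The points `f e` of the `G`-set `X`, with action `φ`, satisfy the relations in `R`. -/
def Satisfies (φ : G →* Perm X) (R : Multiset (ActionRelation E G)) (f : E → X) : Prop :=
  ∀ t ∈ R, φ t.label (f t.src) = f t.tgt

section Satisfies

variable {φ : G →* Perm X} {R S : Multiset (ActionRelation E G)}

theorem satisfies_add {f : E → X} :
    Satisfies φ (R + S) f ↔ Satisfies φ R f ∧ Satisfies φ S f := by
  simp only [Satisfies, Multiset.mem_add, or_imp, forall_and]

theorem satisfies_cons {t : ActionRelation E G} {f : E → X} :
    Satisfies φ (t ::ₘ R) f ↔ φ t.label (f t.src) = f t.tgt ∧ Satisfies φ R f :=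
  Multiset.forall_mem_cons

theorem satisfies_map {i : E → F} {j : H →* G} {R : Multiset (ActionRelation E H)} {f : F → X} :
    Satisfies φ (R.map (map i j)) f ↔ Satisfies (φ.comp j) R (f ∘ i) := by
  simp only [Satisfies, map, Multiset.forall_mem_map_iff, MonoidHom.comp_apply,
    Function.comp_apply]

theorem satisfies_map_twist {δ : E → G} {f : E → X} :
    Satisfies φ (R.map (twist δ)) f ↔ Satisfies φ R fun e ↦ φ (δ e) (f e) := by
  simp only [Satisfies, twist, Multiset.forall_mem_map_iff, map_mul, map_inv, Perm.mul_apply,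
    Perm.inv_eq_iff_eq]

end Satisfies

end ActionRelation

open ActionRelation

/-! ### Presented `G`-sets -/

/-- The `G`-set presented by the generators `E` and the relations `R`: the quotient of the free
`G`-set `G × E` by the equivalence relation generated by `(g * a, x) ∼ (g, y)` for all `g` and all
relations `a • x = y` in `R`. -/
def PresentedAction {E G : Type*} [Group G] (R : Multiset (ActionRelation E G)) : Type _ :=
  Quot fun p q : G × E ↦ ∃ t ∈ R, ∃ g, p = (g * t.label, t.src) ∧ q = (g, t.tgt)

namespace PresentedAction

variable {E G X : Type*} [Group G] {R : Multiset (ActionRelation E G)}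

/-- The image of a generator in the presented `G`-set. -/
def of (R : Multiset (ActionRelation E G)) (e : E) : PresentedAction R :=
  Quot.mk _ (1, e)

instance : MulAction G (PresentedAction R) where
  smul g := Quot.map (Prod.map (g * ·) id) fun _ _ ⟨t, ht, a, hp, hq⟩ ↦
    ⟨t, ht, g * a, by simp [hp, mul_assoc], by simp [hq]⟩
  one_smul := by
    rintro ⟨a, e⟩
    exact congrArg (Quot.mk _) (by simp)
  mul_smul g h := by
    rintro ⟨a, e⟩
    exact congrArg (Quot.mk _) (by simp [mul_assoc])

theorem smul_of (g : G) (e : E) : g • of R e = Quot.mk _ (g, e) :=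
  congrArg (Quot.mk _) (by simp)

theorem exists_eq_smul_of (p : PresentedAction R) : ∃ (g : G) (e : E), p = g • of R e := by
  obtain ⟨g, e⟩ := p
  exact ⟨g, e, (smul_of g e).symm⟩

theorem satisfies_of (R : Multiset (ActionRelation E G)) :
    Satisfies (MulAction.toPermHom G (PresentedAction R)) R (of R) := fun t ht ↦
  (smul_of _ _).trans (Quot.sound ⟨t, ht, 1, by simp, rfl⟩)

/-- The universal property: points satisfying the relations define a map out of the presented
`G`-set. -/
def lift (φ : G →* Perm X) (f : E → X) (hf : Satisfies φ R f) : PresentedAction R → X :=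
  Quot.lift (fun p ↦ φ p.1 (f p.2)) <| by
    rintro _ _ ⟨t, ht, g, rfl, rfl⟩
    simp [hf t ht]

theorem lift_smul_of {φ : G →* Perm X} {f : E → X} (hf : Satisfies φ R f) (g : G) (e : E) :
    lift φ f hf (g • of R e) = φ g (f e) := by
  rw [smul_of]
  rfl

theorem lift_of {φ : G →* Perm X} {f : E → X} (hf : Satisfies φ R f) (e : E) :
    lift φ f hf (of R e) = f e := by
  simpa using lift_smul_of hf 1 e

theorem subsingleton_of_smul_of_eq (h : ∀ (g : G) (x y : E), g • of R x = of R y) :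
    Subsingleton (PresentedAction R) := by
  refine ⟨fun p q ↦ ?_⟩
  obtain ⟨g, x, rfl⟩ := exists_eq_smul_of p
  obtain ⟨g', y, rfl⟩ := exists_eq_smul_of q
  rw [h g x x, h g' y x]

end PresentedAction

namespace ActionRelation.Satisfies

variable {E G X : Type*} [Group G] {R : Multiset (ActionRelation E G)} {φ : G →* Perm X}
  {f : E → X}

theorem apply_eq_of_of_eq (hf : Satisfies φ R f) {x y : E}
    (hxy : PresentedAction.of R x = PresentedAction.of R y) : f x = f y := by
  rw [← PresentedAction.lift_of hf, hxy, PresentedAction.lift_of]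

theorem apply_eq (hf : Satisfies φ R f) (hR : Subsingleton (PresentedAction R)) (g : G) (x y : E) :
    φ g (f x) = f y := by
  rw [← PresentedAction.lift_smul_of hf, ← PresentedAction.lift_of hf]
  exact congrArg _ (Subsingleton.elim _ _)

end ActionRelation.Satisfies

/-! ### Subdivision of relations -/

section Subdivision

variable {E : Type w} {G : Type*} [Group G]

theorem subsingleton_presentedAction_loops {S : Finset G} (hS : Subgroup.closure (S : Set G) = ⊤) :
    Subsingleton (PresentedAction (S.val.map fun g ↦ ActionRelation.mk () g ())) := by
  set R := S.val.map fun g ↦ ActionRelation.mk () g ()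
  have hstab : MulAction.stabilizer G (PresentedAction.of R ()) = ⊤ := by
    rw [eq_top_iff, ← hS, Subgroup.closure_le]
    exact fun g hg ↦ PresentedAction.satisfies_of R _ (Multiset.mem_map_of_mem _ hg)
  refine PresentedAction.subsingleton_of_smul_of_eq fun g _ _ ↦ ?_
  exact MulAction.mem_stabilizer_iff.1 (hstab ▸ Subgroup.mem_top g)

theorem subsingleton_presentedAction_subdivide {x y : E} {g h : G}
    {R : Multiset (ActionRelation E G)}
    (hR : Subsingleton (PresentedAction (⟨x, g * h, y⟩ ::ₘ R))) :
    Subsingleton (PresentedAction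
      (⟨some x, h, none⟩ ::ₘ ⟨none, g, some y⟩ ::ₘ R.map (map some (.id G)))) := by
  have hof := PresentedAction.satisfies_of
    (⟨some x, h, none⟩ ::ₘ ⟨none, g, some y⟩ ::ₘ R.map (map some (.id G)))
  set f := PresentedAction.of
    (⟨some x, h, none⟩ ::ₘ ⟨none, g, some y⟩ ::ₘ R.map (map some (.id G)))
  simp only [satisfies_cons, satisfies_map, MulAction.toPermHom_apply, MulAction.toPerm_apply,
    MonoidHom.comp_id] at hof
  obtain ⟨hh, hg, hsome⟩ := hof
  have hsome_eq (k : G) (e e' : E) : k • f (some e) = f (some e') :=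
    (satisfies_cons.2 ⟨by simp [mul_smul, hh, hg], hsome⟩ :
      Satisfies _ (⟨x, g * h, y⟩ ::ₘ R) (f ∘ some)).apply_eq hR k e e'
  have heq_some : ∀ o, f o = f (some x) := by
    rintro (_ | e)
    · rw [← hh, hsome_eq]
    · simpa using hsome_eq 1 e x
  refine PresentedAction.subsingleton_of_smul_of_eq fun k o o' ↦ ?_
  change k • f o = f o'
  rw [heq_some o, heq_some o', hsome_eq]

open Classical in
theorem exists_subdivision_cons {S : Set G} (hS : Submonoid.closure S = ⊤) (h1 : 1 ∈ S) (g : G) :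
    ∀ {E : Type w} [Finite E] (x y : E) (R : Multiset (ActionRelation E G)),
      Subsingleton (PresentedAction (⟨x, g, y⟩ ::ₘ R)) →
      ∃ (F : Type w) (_ : Finite F) (_ : Nonempty F) (R' : Multiset (ActionRelation F G)),
        Subsingleton (PresentedAction R') ∧
        R'.countP (·.label ∉ S) = R.countP (·.label ∉ S) ∧
        R'.card + Nat.card E = R.card + 1 + Nat.card F := by
  induction g using Submonoid.induction_of_closure_eq_top_left hS with
  | one =>
    intro E _ x y R hR
    exact ⟨E, ‹_›, ⟨x⟩, _, hR, by simp [h1], by simp⟩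
  | mul_left s hs g ih =>
    intro E _ x y R hR
    obtain ⟨F, hF, hF', R', hR', hcount, hcard⟩ :=
      ih _ _ _ (subsingleton_presentedAction_subdivide hR)
    refine ⟨F, hF, hF', R', hR', hcount.trans ?_, ?_⟩
    · rw [Multiset.countP_cons_of_neg (p := fun t : ActionRelation _ G ↦ t.label ∉ S) _
        (not_not.2 hs), Multiset.countP_map, ← Multiset.countP_eq_card_filter]
      rfl
    · rw [Finite.card_option, Multiset.card_cons, Multiset.card_map] at hcard
      lia

open Classical in
theorem exists_subdivision {S : Set G} (hS : Submonoid.closure S = ⊤) (h1 : 1 ∈ S)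
    [Finite E] [Nonempty E] (R : Multiset (ActionRelation E G))
    (hR : Subsingleton (PresentedAction R)) :
    ∃ (F : Type w) (_ : Finite F) (_ : Nonempty F) (R' : Multiset (ActionRelation F G)),
      Subsingleton (PresentedAction R') ∧ (∀ t ∈ R', t.label ∈ S) ∧
      R'.card + Nat.card E = R.card + Nat.card F := by
  induction hk : R.countP (·.label ∉ S) generalizing E with
  | zero =>
    refine ⟨E, ‹_›, ‹_›, R, hR, ?_, rfl⟩
    simpa [Multiset.countP_eq_zero] using hk
  | succ k ih =>
    obtain ⟨⟨x, g, y⟩, ht, hg⟩ := Multiset.countP_pos.1 (k.succ_pos.trans_eq hk.symm)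
    obtain ⟨R, rfl⟩ := Multiset.exists_cons_of_mem ht
    obtain ⟨F, _, _, R', hR', hcount, hcard⟩ := exists_subdivision_cons hS h1 g x y R hR
    rw [Multiset.countP_cons_of_pos (p := fun t : ActionRelation _ G ↦ t.label ∉ S) _ hg,
      Nat.add_right_cancel_iff] at hk
    obtain ⟨F', hF', hF'', R'', hR'', hlabel, hcard'⟩ := ih R' hR' (hcount.trans hk)
    refine ⟨F', hF', hF'', R'', hR'', hlabel, ?_⟩
    rw [Multiset.card_cons]
    lia

end Subdivision

/-! ### Elimination of a generator -/

section Elimination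

variable {E G : Type*} [Group G] {R : Multiset (ActionRelation E G)} {e e' : E}

theorem PresentedAction.exists_src_eq_xor_tgt_eq (hne : e ≠ e') (hee' : of R e = of R e') :
    ∃ t ∈ R, ¬(t.src = e ↔ t.tgt = e) := by
  by_contra! h
  have hsat : Satisfies (1 : G →* Perm Prop) R (· = e) := fun t ht ↦ propext (h t ht)
  exact hne (hsat.apply_eq_of_of_eq hee' ▸ rfl : e' = e).symm

/-- Redirects `e` to `z`, fixing all other elements. -/
noncomputable def redirect (e : E) (z : {x : E // x ≠ e}) (x : E) : {x : E // x ≠ e} :=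
  open Classical in if hx : x = e then z else ⟨x, hx⟩

theorem redirect_self (z : {x : E // x ≠ e}) : redirect e z e = z := by
  simp [redirect]

theorem redirect_coe (z x : {x : E // x ≠ e}) : redirect e z x = x := by
  simp [redirect, x.2]

theorem ActionRelation.exists_solve {t : ActionRelation E G} (ht : ¬(t.src = e ↔ t.tgt = e)) :
    ∃ (z : {x : E // x ≠ e}) (d : G), ∀ (X : Type w) (φ : G →* Perm X) (f : E → X),
      φ t.label (f t.src) = f t.tgt ↔ f e = φ d (f z) := by
  obtain ⟨x, g, y⟩ := t
  rcases eq_or_ne x e with rfl | hx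
  · exact ⟨⟨y, by simpa using ht⟩, g⁻¹, fun X φ f ↦ by simp [eq_symm_apply]⟩
  · obtain rfl : y = e := by simpa [hx] using ht
    exact ⟨⟨x, hx⟩, g, fun X φ f ↦ eq_comm⟩

theorem exists_eliminate (hR : ∃ t ∈ R, ¬(t.src = e ↔ t.tgt = e)) :
    ∃ R' : Multiset (ActionRelation {x : E // x ≠ e} G), R'.card + 1 = R.card ∧
      ∀ (X : Type w) (φ : G →* Perm X) (f : {x : E // x ≠ e} → X), Satisfies φ R' f →
        ∃ h : E → X, Satisfies φ R h ∧ ∀ x : {x : E // x ≠ e}, h x = f x := by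
  classical
  obtain ⟨t, ht, hte⟩ := hR
  obtain ⟨R, rfl⟩ := Multiset.exists_cons_of_mem ht
  obtain ⟨z, d, hsolve⟩ := exists_solve.{w} hte
  refine ⟨(R.map (twist (Pi.mulSingle e d))).map (map (redirect e z) (.id G)), by simp,
    fun X φ f hf ↦ ?_⟩
  rw [satisfies_map, satisfies_map_twist, MonoidHom.comp_id] at hf
  set h : E → X := fun x ↦ φ (Pi.mulSingle (M := fun _ ↦ G) e d x) (f (redirect e z x))
  have hcoe (x : {x : E // x ≠ e}) : h x = f x := by
    simp [h, redirect_coe, Pi.mulSingle_eq_of_ne x.2]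
  refine ⟨h, satisfies_cons.2 ⟨(hsolve X φ h).2 ?_, hf⟩, hcoe⟩
  rw [hcoe]
  simp [h, redirect_self]

end Elimination

/-! ### Relations labelled in the factors of a free product -/

section FreeProduct

variable {A B : Type*} [Group A] [Group B] {E X : Type*}

/-- The relations over `A ∗ B` given by relations labelled in `A` and relations labelled in `B`. -/
def freeProductRelations (R : Multiset (ActionRelation E A)) (S : Multiset (ActionRelation E B)) :
    Multiset (ActionRelation E (A ∗ B)) :=
  R.map (map id inl) + S.map (map id inr)

variable {R : Multiset (ActionRelation E A)} {S : Multiset (ActionRelation E B)}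

theorem satisfies_freeProductRelations {φ : A ∗ B →* Perm X} {f : E → X} :
    Satisfies φ (freeProductRelations R S) f ↔
      Satisfies (φ.comp inl) R f ∧ Satisfies (φ.comp inr) S f := by
  simp only [freeProductRelations, satisfies_add, satisfies_map, Function.comp_id]

theorem exists_eq_freeProductRelations (T : Multiset (ActionRelation E (A ∗ B)))
    (hT : ∀ t ∈ T, t.label ∈ Set.range (inl : A →* A ∗ B) ∪ Set.range inr) :
    ∃ (R : Multiset (ActionRelation E A)) (S : Multiset (ActionRelation E B)),
      T = freeProductRelations R S := by
  induction T using Multiset.induction with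
  | empty => exact ⟨0, 0, by simp [freeProductRelations]⟩
  | cons t T ih =>
    rw [Multiset.forall_mem_cons] at hT
    obtain ⟨R, S, rfl⟩ := ih hT.2
    obtain ⟨x, g, y⟩ := t
    rcases hT.1 with ⟨a, rfl⟩ | ⟨b, rfl⟩
    · exact ⟨⟨x, a, y⟩ ::ₘ R, S, by simp [freeProductRelations, ActionRelation.map]⟩
    · exact ⟨R, ⟨x, b, y⟩ ::ₘ S, by simp [freeProductRelations, ActionRelation.map]⟩

theorem subsingleton_presentedAction_swap
    (h : Subsingleton (PresentedAction (freeProductRelations R S))) :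
    Subsingleton (PresentedAction (freeProductRelations S R)) := by
  refine PresentedAction.subsingleton_of_smul_of_eq fun g x y ↦ ?_
  obtain ⟨hS, hR⟩ := satisfies_freeProductRelations.1
    (PresentedAction.satisfies_of (freeProductRelations S R))
  have hsat : Satisfies ((MulAction.toPermHom (B ∗ A) _).comp (Monoid.Coprod.swap A B))
      (freeProductRelations R S) (PresentedAction.of (freeProductRelations S R)) :=
    satisfies_freeProductRelations.2 ⟨hR, hS⟩
  simpa using hsat.apply_eq h (Monoid.Coprod.swap B A g) x y

theorem rank_le_card_relations [Group.FG A] [Nonempty E]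
    (h : Subsingleton (PresentedAction (freeProductRelations R S))) :
    Group.rank A ≤ R.card := by
  classical
  set T : Finset A := (R.map label).toFinset
  set K := Subgroup.closure (T : Set A)
  have hsat : Satisfies (Monoid.Coprod.lift (MulAction.toPermHom A (A ⧸ K)) (1 : B →* _))
      (freeProductRelations R S) (fun _ ↦ ((1 : A) : A ⧸ K)) := by
    refine satisfies_freeProductRelations.2 ⟨fun t ht ↦ ?_, fun t _ ↦ rfl⟩
    have htK : t.label ∈ K := Subgroup.subset_closure (by simpa [T] using ⟨t, ht, rfl⟩)
    simpa [eq_comm (b := ((1 : A) : A ⧸ K)), QuotientGroup.eq] using htK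
  have hK : K = ⊤ := by
    refine eq_top_iff.2 fun a _ ↦ ?_
    have ha := hsat.apply_eq h (inl a) (Classical.arbitrary E) (Classical.arbitrary E)
    simpa [eq_comm (b := ((1 : A) : A ⧸ K)), QuotientGroup.eq] using ha
  calc Group.rank A ≤ T.card := Group.rank_le hK
    _ ≤ (R.map label).card := Multiset.toFinset_card_le _
    _ = R.card := Multiset.card_map _ _

theorem exists_injective_satisfies_freeProductRelations {Y Z : Type*} {φ : A →* Perm Y}
    {ψ : B →* Perm Z} {f : E → Y} {g : E → Z} (hf : Satisfies φ R f) (hg : Satisfies ψ S g)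
    (hf_inj : f.Injective) (hg_inj : g.Injective) :
    ∃ (θ : A ∗ B →* Perm (Y ⊕ Z)) (h : E → Y ⊕ Z),
      Satisfies θ (freeProductRelations R S) h ∧ h.Injective := by
  -- `σ` swaps the two copies of `E` inside `Y ⊕ Z`; conjugating by it moves the action of `B` so
  -- that both groups act on the copy inside `Y`.
  let σ : Perm (Y ⊕ Z) := Perm.viaEmbedding (sumComm E E)
    (Function.Embedding.sumMap ⟨f, hf_inj⟩ ⟨g, hg_inj⟩)
  have hσ_inl (e : E) : σ (.inl (f e)) = .inr (g e) := Perm.viaEmbedding_apply _ _ (Sum.inl e)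
  let φ' : A →* Perm (Y ⊕ Z) := (Perm.sumCongrHom Y Z).comp (φ.prod 1)
  let ψ' : B →* Perm (Y ⊕ Z) := (Perm.sumCongrHom Y Z).comp (.prod 1 ψ)
  refine ⟨Monoid.Coprod.lift φ' ((MulAut.conj σ⁻¹).toMonoidHom.comp ψ'), fun e ↦ .inl (f e),
    satisfies_freeProductRelations.2 ⟨fun t ht ↦ ?_, fun t ht ↦ ?_⟩,
    Sum.inl_injective.comp hf_inj⟩
  · simp [φ', hf t ht]
  · simp [ψ', hσ_inl, hg t ht, symm_apply_eq]

theorem exists_ne_of_eq_or_of_eq [Nontrivial E]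
    (h : Subsingleton (PresentedAction (freeProductRelations R S))) :
    (∃ e e', e ≠ e' ∧ PresentedAction.of R e = PresentedAction.of R e') ∨
      ∃ e e', e ≠ e' ∧ PresentedAction.of S e = PresentedAction.of S e' := by
  by_contra! hcon
  obtain ⟨hR, hS⟩ := hcon
  obtain ⟨θ, f, hf, hf_inj⟩ := exists_injective_satisfies_freeProductRelations
    (PresentedAction.satisfies_of R) (PresentedAction.satisfies_of S)
    (fun e e' ↦ not_imp_not.1 (hR e e')) (fun e e' ↦ not_imp_not.1 (hS e e'))
  obtain ⟨e, e', hne⟩ := exists_pair_ne E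
  exact hne (hf_inj (by simpa using hf.apply_eq h 1 e e'))

theorem exists_fold {e e' : E} (h : Subsingleton (PresentedAction (freeProductRelations R S)))
    (hne : e ≠ e') (hee' : PresentedAction.of R e = PresentedAction.of R e') :
    ∃ (R' : Multiset (ActionRelation {x : E // x ≠ e} A))
      (S' : Multiset (ActionRelation {x : E // x ≠ e} B)),
      R'.card + 1 = R.card ∧ S'.card = S.card ∧
      Subsingleton (PresentedAction (freeProductRelations R' S')) := by
  obtain ⟨R', hcard, hR'⟩ :=
    exists_eliminate (PresentedAction.exists_src_eq_xor_tgt_eq hne hee')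
  set S' := S.map (map (redirect e ⟨e', hne.symm⟩) (.id B))
  refine ⟨R', S', hcard, Multiset.card_map _ _, ?_⟩
  obtain ⟨hofR, hofS⟩ := satisfies_freeProductRelations.1
    (PresentedAction.satisfies_of (freeProductRelations R' S'))
  set f := PresentedAction.of (freeProductRelations R' S')
  obtain ⟨k, hkR, hk⟩ := hR' _ _ _ hofR
  have hf_redirect : f ∘ redirect e ⟨e', hne.symm⟩ = k := by
    funext x
    rcases eq_or_ne x e with rfl | hx
    · rw [hkR.apply_eq_of_of_eq hee', Function.comp_apply, redirect_self, ← hk]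
    · lift x to {x // x ≠ e} using hx
      rw [hk, Function.comp_apply, redirect_coe]
  rw [satisfies_map, hf_redirect] at hofS
  have hkRS := satisfies_freeProductRelations.2 ⟨hkR, hofS⟩
  refine PresentedAction.subsingleton_of_smul_of_eq fun g x y ↦ ?_
  change g • f x = f y
  rw [← hk, ← hk]
  exact hkRS.apply_eq h g x y

theorem exists_fold_of_nontrivial [Nontrivial E]
    (h : Subsingleton (PresentedAction (freeProductRelations R S))) :
    ∃ (e : E) (R' : Multiset (ActionRelation {x : E // x ≠ e} A))
      (S' : Multiset (ActionRelation {x : E // x ≠ e} B)),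
      R'.card + S'.card + 1 = R.card + S.card ∧
      Subsingleton (PresentedAction (freeProductRelations R' S')) := by
  rcases exists_ne_of_eq_or_of_eq h with ⟨e, e', hne, hee'⟩ | ⟨e, e', hne, hee'⟩
  · obtain ⟨R', S', hR', hS', h'⟩ := exists_fold h hne hee'
    exact ⟨e, R', S', by lia, h'⟩
  · obtain ⟨S', R', hS', hR', h'⟩ := exists_fold (subsingleton_presentedAction_swap h) hne hee'
    exact ⟨e, R', S', by lia, subsingleton_presentedAction_swap h'⟩

end FreeProduct

/-! ### The rank of a free product -/

section Rank

variable {A B G : Type*} [Group A] [Group B] [Group G]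

theorem rank_add_rank_add_card_le [Group.FG A] [Group.FG B] {E : Type*} [Finite E] [Nonempty E]
    {R : Multiset (ActionRelation E A)} {S : Multiset (ActionRelation E B)}
    (h : Subsingleton (PresentedAction (freeProductRelations R S))) :
    Group.rank A + Group.rank B + Nat.card E ≤ R.card + S.card + 1 := by
  induction hn : Nat.card E generalizing E with
  | zero => exact absurd hn Nat.card_pos.ne'
  | succ n ih =>
    rcases subsingleton_or_nontrivial E with _ | _
    · have hA := rank_le_card_relations h
      have hB := rank_le_card_relations (subsingleton_presentedAction_swap h)
      have hE : Nat.card E = 1 := Nat.card_unique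
      lia
    · obtain ⟨e, R', S', hcard, h'⟩ := exists_fold_of_nontrivial h
      have hE : Nat.card {x : E // x ≠ e} + 1 = n + 1 := by
        classical rw [← hn, ← Finite.card_option, Nat.card_congr (optionSubtypeNe e)]
      obtain ⟨x, hx⟩ := exists_ne e
      have : Nonempty {x : E // x ≠ e} := ⟨x, hx⟩
      have := ih h' (Nat.add_right_cancel hE)
      lia

instance [Group.FG A] [Group.FG B] : Group.FG (A ∗ B) := by
  rw [Group.fg_def, ← Monoid.Coprod.range_inl_sup_range_inr]
  exact .sup ((Group.fg_iff_subgroup_fg _).1 inferInstance)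
    ((Group.fg_iff_subgroup_fg _).1 inferInstance)

theorem rank_coprod_le [Group.FG A] [Group.FG B] :
    Group.rank (A ∗ B) ≤ Group.rank A + Group.rank B := by
  classical
  obtain ⟨S, hS, hS_top⟩ := Group.rank_spec A
  obtain ⟨T, hT, hT_top⟩ := Group.rank_spec B
  have htop :
      Subgroup.closure ((S.image inl ∪ T.image inr : Finset (A ∗ B)) : Set (A ∗ B)) = ⊤ := by
    rw [Finset.coe_union, Finset.coe_image, Finset.coe_image, Subgroup.closure_union,
      ← MonoidHom.map_closure, ← MonoidHom.map_closure, hS_top, hT_top,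
      ← MonoidHom.range_eq_map, ← MonoidHom.range_eq_map, Monoid.Coprod.range_inl_sup_range_inr]
  calc Group.rank (A ∗ B) ≤ (S.image inl ∪ T.image inr : Finset (A ∗ B)).card := Group.rank_le htop
    _ ≤ (S.image inl : Finset (A ∗ B)).card + (T.image inr : Finset (A ∗ B)).card :=
      Finset.card_union_le _ _
    _ ≤ S.card + T.card := add_le_add Finset.card_image_le Finset.card_image_le
    _ = Group.rank A + Group.rank B := by rw [hS, hT]

theorem rank_add_rank_le_rank_coprod [Group.FG A] [Group.FG B] :
    Group.rank A + Group.rank B ≤ Group.rank (A ∗ B) := by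
  obtain ⟨T, hT, hT_top⟩ := Group.rank_spec (A ∗ B)
  have hone : 1 ∈ Set.range (inl : A →* A ∗ B) ∪ Set.range (inr : B →* A ∗ B) :=
    .inl ⟨1, map_one _⟩
  obtain ⟨E, _, _, R, hR, hlabel, hcard⟩ :=
    exists_subdivision Monoid.Coprod.mclosure_range_inl_union_inr hone _
      (subsingleton_presentedAction_loops hT_top)
  obtain ⟨RA, RB, rfl⟩ := exists_eq_freeProductRelations R hlabel
  have hrank := rank_add_rank_add_card_le hR
  simp only [freeProductRelations, Multiset.card_add, Multiset.card_map, Finset.card_val,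
    Nat.card_unique, hT] at hcard
  lia

theorem rank_coprod [Group.FG A] [Group.FG B] :
    Group.rank (A ∗ B) = Group.rank A + Group.rank B :=
  rank_coprod_le.antisymm rank_add_rank_le_rank_coprod

theorem isLeast_rank [Group.FG G] :
    IsLeast {n : ℕ | ∃ T : Fin n → G, Subgroup.closure (Set.range T) = ⊤} (Group.rank G) := by
  classical
  constructor
  · obtain ⟨S, hS, hS_top⟩ := Group.rank_spec G
    refine ⟨fun i ↦ (S.equivFinOfCardEq hS).symm i, ?_⟩
    rw [← hS_top, ← Function.comp_def, EquivLike.range_comp, Subtype.range_coe]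
  · rintro n ⟨T, hT⟩
    calc Group.rank G ≤ (Finset.univ.image T).card := Group.rank_le (by simpa using hT)
      _ ≤ n := Finset.card_image_le.trans_eq (Finset.card_fin n)

theorem fg_of_closure_range_eq_top {n : ℕ} {T : Fin n → G}
    (hT : Subgroup.closure (Set.range T) = ⊤) : Group.FG G :=
  Group.fg_iff.2 ⟨_, hT, Set.finite_range T⟩

end Rank

/-- **Grushko's rank formula.** If `A` and `B` are finitely generated groups with ranks
`a` and `b` respectively (where the rank of a group is the least `n` such that the group
is generated by some `n`-tuple of its elements), then the free product `A ∗ B` has rank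
`a + b`. -/
theorem rank_free_product {A B : Type*} [Group A] [Group B] (a b : ℕ)
    (hA : IsLeast {n : ℕ | ∃ T : Fin n → A, Subgroup.closure (Set.range T) = ⊤} a)
    (hB : IsLeast {n : ℕ | ∃ T : Fin n → B, Subgroup.closure (Set.range T) = ⊤} b) :
    IsLeast {n : ℕ | ∃ T : Fin n → Monoid.Coprod A B,
      Subgroup.closure (Set.range T) = ⊤} (a + b) := by
  obtain ⟨_, hS⟩ := hA.1
  obtain ⟨_, hT⟩ := hB.1
  have : Group.FG A := fg_of_closure_range_eq_top hS
  have : Group.FG B := fg_of_closure_range_eq_top hT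
  rw [hA.unique isLeast_rank, hB.unique isLeast_rank, ← rank_coprod]
  exact isLeast_rank
end

section
/- Let G be the free product of a family (C_i)_{i ∈ I} of cyclic groups. Then every subgroup H of G is isomorphic to a free product of a family of cyclic groups. -/
universe u

/-!
This is the wreath product argument of Ribes and Steinberg. Let the free product `G` act on
`G ⧸ H`, and build a spanning tree of this set out of the orbits of the factors. The tree yields a
transversal `s`, and for each factor `C i` a transversal `sᵢ` whose values in one `C i`-orbit differ
by elements of `C i`. Every `g * s a` can be compared with `s (g • a)` one letter at a time, so `H`
is generated by the elements `(s a)⁻¹ * sᵢ a` and by its intersections with certain conjugates of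
the factors.

These generate `H` freely: given their images in a group `L`, each factor gets an `L`-valued cocycle
on `G ⧸ H`, namely the obvious cocycle of its orbits twisted by the values at `(s a)⁻¹ * sᵢ a`.
Since `G` is a free product, these cocycles, that is, homomorphisms to the wreath product of `L` and
`G`, extend to one cocycle on `G`. Its restriction to `H`, the stabilizer of the base point, is the
desired homomorphism `H →* L`, because the cocycle is trivial along the tree.
-/

universe v

section Cocycle

variable {G A L : Type*} [Group G] [MulAction G A] [Group L]

/-- A cocycle of an action of `G` on `A` with values in `L`: a functor from the action groupoid to
`L`, with `c g a` the value at the arrow from `a` to `g • a`. -/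
def IsActionCocycle (c : G → A → L) : Prop :=
  ∀ g h a, c (g * h) a = c g (h • a) * c h a

namespace IsActionCocycle

variable {c : G → A → L} (hc : IsActionCocycle c)
include hc

theorem map_one (a : A) : c 1 a = 1 := by
  simpa using hc 1 1 a

theorem map_inv (g : G) (a : A) : c g⁻¹ (g • a) = (c g a)⁻¹ := by
  rw [eq_inv_iff_mul_eq_one, ← hc, inv_mul_cancel, hc.map_one]

/-- The homomorphism to which a cocycle restricts on the stabilizer of a point. -/
def stabilizerHom (a : A) : MulAction.stabilizer G a →* L :=
  MonoidHom.mk' (fun g => c g a) fun g h => by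
    rw [Subgroup.coe_mul, hc, MulAction.mem_stabilizer_iff.mp h.2]

end IsActionCocycle

end Cocycle

section FreeProduct

open Monoid (CoprodI)
open Monoid.CoprodI (of)

variable {ι : Type*}

theorem exists_isActionCocycle_extending {C : ι → Type*} [∀ i, Group (C i)] {A L : Type*}
    [MulAction (CoprodI C) A] [Group L] (c : ∀ i, C i → A → L)
    (hc : ∀ i x y a, c i (x * y) a = c i x ((of y : CoprodI C) • a) * c i y a) :
    ∃ c' : CoprodI C → A → L, IsActionCocycle c' ∧ ∀ i x a, c' (of (i := i) x) a = c i x a := by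
  let ψ : CoprodI C →* (A → L) ⋊[mulAutArrow] CoprodI C := CoprodI.lift fun i =>
    MonoidHom.mk' (fun x => ⟨fun a => c i x ((of x : CoprodI C)⁻¹ • a), of x⟩) fun x y => by
      ext a
      · change c i (x * y) ((of (x * y) : CoprodI C)⁻¹ • a) =
          c i x ((of x : CoprodI C)⁻¹ • a) * c i y ((of y : CoprodI C)⁻¹ • (of x)⁻¹ • a)
        simp [hc, mul_smul]
      · simp
  have right_ψ (g : CoprodI C) : (ψ g).right = g :=
    DFunLike.congr_fun (CoprodI.ext_hom (SemidirectProduct.rightHom.comp ψ) (.id _) fun i => by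
      ext x; simp [ψ]) g
  refine ⟨fun g a => (ψ g).left (g • a), fun g h a => ?_, fun i x a => ?_⟩
  · simp only [map_mul, SemidirectProduct.mul_left, Pi.mul_apply, right_ψ]
    change (ψ g).left _ * (ψ h).left (g⁻¹ • (g * h) • a) = _
    rw [mul_smul, inv_smul_smul]
  · simp [ψ]

theorem coprodI_lift_subtype_injective {G : Type*} [Group G] {H : Subgroup G}
    {F : ι → Subgroup G} (hF : ∀ k, F k ≤ H) (f : H →* CoprodI fun k => ↥(F k))
    (hf : ∀ k (x : F k), f ⟨x, hF k x.2⟩ = of (M := fun k => ↥(F k)) (i := k) x) :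
    Function.Injective (CoprodI.lift fun k => (F k).subtype) := by
  let φ : CoprodI (fun k => ↥(F k)) →* H := CoprodI.lift fun k => Subgroup.inclusion (hF k)
  have f_comp_φ : f.comp φ = .id _ := CoprodI.ext_hom _ _ fun k =>
    MonoidHom.ext fun x => (congrArg f (CoprodI.lift_of (M := fun k => ↥(F k)) _ x)).trans (hf k x)
  have subtype_comp_φ : H.subtype.comp φ = CoprodI.lift fun k => (F k).subtype :=
    CoprodI.ext_hom _ _ fun k => by ext x; simp [φ]
  rw [← subtype_comp_φ]
  exact H.subtype_injective.comp (Function.LeftInverse.injective (DFunLike.congr_fun f_comp_φ))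

/-- The isomorphism of free products induced by isomorphisms of the factors. -/
def coprodICongr {M N : ι → Type*} [∀ i, Monoid (M i)] [∀ i, Monoid (N i)]
    (e : ∀ i, M i ≃* N i) : CoprodI M ≃* CoprodI N :=
  MonoidHom.toMulEquiv (CoprodI.lift fun i => of.comp (e i).toMonoidHom)
    (CoprodI.lift fun i => of.comp (e i).symm.toMonoidHom)
    (CoprodI.ext_hom _ _ fun i => by ext x; simp)
    (CoprodI.ext_hom _ _ fun i => by ext x; simp)

end FreeProduct

section OrbitRepresentatives

variable {K A α : Type*} [Group K] [MulAction K A] [LinearOrder α] [WellFoundedLT α]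

variable (K) in
theorem exists_minimal_orbit_rep (depth : A → α) :
    ∃ rep : A → A, (∀ (x : K) a, rep (x • a) = rep a) ∧ (∀ a, ∃ x : K, x • rep a = a) ∧
      ∀ (x : K) a, depth (rep a) ≤ depth (x • a) := by
  let rep (a : A) : A := Function.argminOn depth (MulAction.orbit K a) (MulAction.nonempty_orbit a)
  refine ⟨rep, fun x a => ?_, fun a => ?_, fun x a => ?_⟩
  · simp only [rep, MulAction.orbit_smul]
  · exact MulAction.mem_orbit_symm.mp (Function.argminOn_mem depth (MulAction.orbit K a) _)
  · exact Function.argminOn_le _ _ (MulAction.mem_orbit a x)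

variable (K) in
theorem exists_minimal_orbit_rep_and_transporter (depth : A → α) :
    ∃ (rep : A → A) (w : A → K), (∀ (x : K) a, rep (x • a) = rep a) ∧ (∀ a, w a • rep a = a) ∧
      (∀ a, w (rep a) = 1) ∧ ∀ (x : K) a, depth (rep a) ≤ depth (x • a) := by
  obtain ⟨rep, rep_smul, exists_smul_rep, depth_rep_le⟩ := exists_minimal_orbit_rep K depth
  choose w hw using exists_smul_rep
  have rep_rep (a : A) : rep (rep a) = rep a := by
    conv_rhs => rw [← hw a, rep_smul]
  have w_rep_smul (a : A) : w (rep a) • rep a = rep a := by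
    simpa only [rep_rep] using hw (rep a)
  refine ⟨rep, fun a => w a * (w (rep a))⁻¹, rep_smul, fun a => ?_, fun a => ?_, depth_rep_le⟩
  · rw [mul_smul, inv_smul_eq_iff.mpr (w_rep_smul a).symm, hw]
  · simp only [rep_rep, mul_inv_cancel]

end OrbitRepresentatives

theorem exists_rec_of_wellFounded {A B : Type*} {r : A → A → Prop} (hr : WellFounded r) (a₀ : A)
    (parent : ∀ a ≠ a₀, A) (hparent : ∀ a ha, r (parent a ha) a) (b₀ : B)
    (step : ∀ a ≠ a₀, B → B) :
    ∃ s : A → B, s a₀ = b₀ ∧ ∀ a ha, s a = step a ha (s (parent a ha)) := by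
  classical
  let s : A → B := hr.fix fun a ih =>
    if ha : a = a₀ then b₀ else step a ha (ih (parent a ha) (hparent a ha))
  refine ⟨s, (hr.fix_eq _ _).trans (dif_pos rfl), fun a ha => (hr.fix_eq _ _).trans (dif_neg ha)⟩

section KuroshSystems

open Monoid (CoprodI)
open Monoid.CoprodI (of)

variable {ι : Type*} {C : ι → Type*} [∀ i, Group (C i)] {A : Type*} [MulAction (CoprodI C) A]

variable (C) in
theorem exists_depth [MulAction.IsPretransitive (CoprodI C) A] (a₀ : A) :
    ∃ depth : A → ℕ, ∀ a ≠ a₀, ∃ i, ∃ x : C i, depth ((of x : CoprodI C) • a) < depth a := by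
  classical
  let lengths (a : A) : Set ℕ :=
    (fun w : CoprodI.Word C => w.toList.length) '' {w | w.prod • a₀ = a}
  have lengths_nonempty (a : A) : (lengths a).Nonempty := by
    obtain ⟨g, hg⟩ := MulAction.exists_smul_eq (CoprodI C) a₀ a
    exact ⟨_, CoprodI.Word.equiv g,
      (congrArg (· • a₀) (CoprodI.Word.equiv.left_inv g)).trans hg, rfl⟩
  refine ⟨fun a => sInf (lengths a), fun a ha => ?_⟩
  obtain ⟨w, hw, hlength⟩ := Nat.sInf_mem (lengths_nonempty a)
  cases w using CoprodI.Word.consRecOn with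
  | empty => exact absurd (by simpa using hw.symm) ha
  | cons i x w _ _ =>
    have : w.toList.length ∈ lengths ((of x⁻¹ : CoprodI C) • a) :=
      ⟨w, by simp [← show _ = a from hw, mul_smul], rfl⟩
    exact ⟨i, x⁻¹, (Nat.sInf_le this).trans_lt (by simp [← hlength, CoprodI.Word.cons])⟩

variable (C) in
/-- A Kurosh system of transversals for an action of a free product with base point `a₀`. The point
`rep i a` represents the `C i`-orbit of `a`, while `transversal` and all the `factorTransversal i`
choose group elements that move `a₀` to a given point. The last field says that the edges from `a`
to `rep i a` along which `transversal` and `factorTransversal i` agree at `a` lead from every point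
to `a₀`. -/
structure KuroshSystem (a₀ : A) where
  rep : ι → A → A
  transversal : A → CoprodI C
  factorTransversal : ι → A → CoprodI C
  rep_of_smul : ∀ i (x : C i) a, rep i ((of x : CoprodI C) • a) = rep i a
  exists_factorTransversal_eq : ∀ i a, ∃ x : C i, (of x : CoprodI C) • rep i a = a ∧
    factorTransversal i a = of x * transversal (rep i a)
  factorTransversal_rep : ∀ i a, factorTransversal i (rep i a) = transversal (rep i a)
  transversal_base : transversal a₀ = 1
  induction : ∀ p : A → Prop, p a₀ →
    (∀ i a, factorTransversal i a = transversal a → p (rep i a) → p a) → ∀ a, p a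

variable (C) in
theorem nonempty_kuroshSystem [MulAction.IsPretransitive (CoprodI C) A] (a₀ : A) :
    Nonempty (KuroshSystem C a₀) := by
  obtain ⟨depth, hdepth⟩ := exists_depth C a₀
  have exists_rep (i : ι) : ∃ (rep : A → A) (w : A → C i),
      (∀ (x : C i) a, rep ((of x : CoprodI C) • a) = rep a) ∧
      (∀ a, (of (w a) : CoprodI C) • rep a = a) ∧ (∀ a, w (rep a) = 1) ∧
      ∀ (x : C i) a, depth (rep a) ≤ depth ((of x : CoprodI C) • a) :=
    letI : MulAction (C i) A := MulAction.compHom A (of : C i →* CoprodI C)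
    exists_minimal_orbit_rep_and_transporter (C i) depth
  choose rep w rep_of_smul w_smul_rep w_rep depth_rep_le using exists_rep
  choose label x depth_lt using hdepth
  have depth_rep_lt (a : A) (ha : a ≠ a₀) : depth (rep (label a ha) a) < depth a :=
    (depth_rep_le _ (x a ha) a).trans_lt (depth_lt a ha)
  obtain ⟨s, s_base, s_eq⟩ := exists_rec_of_wellFounded (measure depth).wf a₀
    (fun a ha => rep (label a ha) a) depth_rep_lt (1 : CoprodI C)
    fun a ha g => of (w (label a ha) a) * g
  have rep_rep (i : ι) (a : A) : rep i (rep i a) = rep i a := by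
    conv_rhs => rw [← w_smul_rep i a, rep_of_smul]
  exact ⟨{
    rep, rep_of_smul
    transversal := s
    factorTransversal := fun i a => of (w i a) * s (rep i a)
    exists_factorTransversal_eq := fun i a => ⟨w i a, w_smul_rep i a, rfl⟩
    factorTransversal_rep := fun i a => by rw [w_rep, rep_rep, map_one, one_mul]
    transversal_base := s_base
    induction := fun p base step a => by
      induction a using (measure depth).wf.induction with
      | _ a ih =>
        by_cases ha : a = a₀
        · exact ha ▸ base
        · exact step (label a ha) a (s_eq a ha).symm (ih _ (depth_rep_lt a ha)) }⟩

namespace KuroshSystem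

variable {a₀ : A} (T : KuroshSystem C a₀)

theorem rep_rep (i : ι) (a : A) : T.rep i (T.rep i a) = T.rep i a := by
  obtain ⟨x, hx, -⟩ := T.exists_factorTransversal_eq i a
  conv_rhs => rw [← hx, T.rep_of_smul]

theorem transversal_smul (a : A) : T.transversal a • a₀ = a := by
  refine T.induction (fun a => T.transversal a • a₀ = a) (by simp [T.transversal_base])
    (fun i a ha ih => ?_) a
  obtain ⟨x, hx, hs⟩ := T.exists_factorTransversal_eq i a
  rw [← ha, hs, mul_smul, ih, hx]

theorem factorTransversal_smul (i : ι) (a : A) : T.factorTransversal i a • a₀ = a := by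
  obtain ⟨x, hx, hs⟩ := T.exists_factorTransversal_eq i a
  rw [hs, mul_smul, T.transversal_smul, hx]

/-- The closed path that leaves `a₀` by one transversal and returns by the other. The nontrivial
ones generate the infinite cyclic factors of the stabilizer of `a₀`. -/
def loop (i : ι) (a : A) : CoprodI C :=
  (T.transversal a)⁻¹ * T.factorTransversal i a

theorem loop_eq_one_iff {i : ι} {a : A} :
    T.loop i a = 1 ↔ T.factorTransversal i a = T.transversal a := by
  rw [loop, inv_mul_eq_one, eq_comm]

theorem loop_rep (i : ι) (a : A) : T.loop i (T.rep i a) = 1 :=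
  T.loop_eq_one_iff.mpr (T.factorTransversal_rep i a)

theorem loop_mem_stabilizer (i : ι) (a : A) :
    T.loop i a ∈ MulAction.stabilizer (CoprodI C) a₀ := by
  rw [MulAction.mem_stabilizer_iff, loop, mul_smul, T.factorTransversal_smul, inv_smul_eq_iff,
    T.transversal_smul]

/-- The stabilizer of `a` in the factor `C i`, moved into the stabilizer of `a₀` by the transversal.
For `a` running through the representatives of the orbits of the factors, these are the factors of
the stabilizer of `a₀` other than the infinite cyclic ones. -/
def vertexGroup (i : ι) (a : A) : Subgroup (CoprodI C) :=
  MulAction.stabilizer (CoprodI C) a₀ ⊓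
    ((MulAut.conj (T.transversal a)⁻¹).toMonoidHom.comp (of : C i →* CoprodI C)).range

theorem vertexLoop_mem (i : ι) (x : C i) (a : A) :
    (T.factorTransversal i ((of x : CoprodI C) • a))⁻¹ * of x * T.factorTransversal i a ∈
      T.vertexGroup i (T.rep i a) := by
  refine ⟨?_, ?_⟩
  · change (_ : CoprodI C) • a₀ = a₀
    rw [mul_smul, mul_smul, T.factorTransversal_smul, inv_smul_eq_iff,
      T.factorTransversal_smul]
  · obtain ⟨y, -, hy⟩ := T.exists_factorTransversal_eq i a
    obtain ⟨z, -, hz⟩ := T.exists_factorTransversal_eq i ((of x : CoprodI C) • a)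
    refine ⟨z⁻¹ * x * y, ?_⟩
    rw [hy, hz, T.rep_of_smul]
    simp [mul_assoc]

/-- The comparison of `of x * sᵢ a` with `sᵢ (of x • a)`, where `sᵢ` is the transversal of the
factor `C i`. -/
def vertexLoop (i : ι) (x : C i) (a : A) : T.vertexGroup i (T.rep i a) :=
  ⟨_, T.vertexLoop_mem i x a⟩

theorem vertexLoop_rep {i : ι} {x : C i} {a : A} (hx : (of x : CoprodI C) • T.rep i a = a)
    (ha : T.factorTransversal i a = of x * T.transversal (T.rep i a)) :
    T.vertexLoop i x (T.rep i a) = 1 := by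
  ext
  simp [vertexLoop, hx, ha, T.factorTransversal_rep]

theorem vertexLoop_of_rep_eq {i : ι} {x : C i} {a : A} (ha : T.rep i a = a)
    (hx : (of x : CoprodI C) • a = a) :
    (T.vertexLoop i x a : CoprodI C) = (T.transversal a)⁻¹ * of x * T.transversal a := by
  have : T.factorTransversal i a = T.transversal a := by
    simpa only [ha] using T.factorTransversal_rep i a
  simp [vertexLoop, hx, this]

section UniversalProperty

variable {L : Type*} [Group L] (E : ι → A → L) (σ : ∀ i a, T.rep i a = a → (T.vertexGroup i a →* L))

theorem vertexHom_congr {i : ι} {a b : A} (ha : T.rep i a = a) (hb : T.rep i b = b) (hab : a = b)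
    {v : T.vertexGroup i a} {w : T.vertexGroup i b} (hvw : (v : CoprodI C) = w) :
    σ i a ha v = σ i b hb w := by
  subst hab
  rw [Subtype.ext hvw]

theorem vertexHom_vertexLoop_mul (i : ι) (x y : C i) (a : A) :
    σ i _ (T.rep_rep i a) (T.vertexLoop i (x * y) a) =
      σ i _ (T.rep_rep i _) (T.vertexLoop i x ((of y : CoprodI C) • a)) *
        σ i _ (T.rep_rep i a) (T.vertexLoop i y a) := by
  have hrep : T.rep i ((of y : CoprodI C) • a) = T.rep i a := T.rep_of_smul i y a
  rw [T.vertexHom_congr σ (T.rep_rep i _) (T.rep_rep i a) hrep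
    (w := ⟨_, hrep ▸ T.vertexLoop_mem i x ((of y : CoprodI C) • a)⟩) rfl, ← map_mul]
  congr 1
  ext
  simp [vertexLoop, mul_smul, mul_assoc]

/-- A cocycle whose restriction to every factor is the cocycle `σ` of comparisons with the orbit
representatives, twisted by `E`. -/
structure IsTwistedCocycle (c : CoprodI C → A → L) : Prop where
  isActionCocycle : IsActionCocycle c
  map_of : ∀ i (x : C i) a, c (of x) a =
    E i ((of x : CoprodI C) • a) * σ i _ (T.rep_rep i a) (T.vertexLoop i x a) * (E i a)⁻¹

theorem exists_isTwistedCocycle : ∃ c, T.IsTwistedCocycle E σ c := by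
  obtain ⟨c, hc, map_of⟩ := exists_isActionCocycle_extending
    (fun i (x : C i) a => E i ((of x : CoprodI C) • a) *
      σ i _ (T.rep_rep i a) (T.vertexLoop i x a) * (E i a)⁻¹) fun i x y a => by
    rw [T.vertexHom_vertexLoop_mul, map_mul, mul_smul]
    group
  exact ⟨c, hc, map_of⟩

namespace IsTwistedCocycle

variable {T E σ} {c : CoprodI C → A → L} (hc : T.IsTwistedCocycle E σ c)
  (hE : ∀ i a, T.loop i a = 1 → E i a = 1)
include hc hE

theorem map_factorTransversal (i : ι) (a : A) :
    c (T.factorTransversal i a) a₀ = E i a * c (T.transversal (T.rep i a)) a₀ := by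
  obtain ⟨x, hx, ha⟩ := T.exists_factorTransversal_eq i a
  rw [ha, hc.isActionCocycle, T.transversal_smul, hc.map_of, hx, T.vertexLoop_rep hx ha,
    hE i _ (T.loop_rep i a), map_one, inv_one, mul_one, mul_one]

theorem map_transversal (a : A) : c (T.transversal a) a₀ = 1 := by
  refine T.induction (fun a => c (T.transversal a) a₀ = 1) ?_ (fun i a ha ih => ?_) a
  · rw [T.transversal_base, hc.isActionCocycle.map_one]
  · rw [← ha, hc.map_factorTransversal hE, ih, hE i a (T.loop_eq_one_iff.mpr ha), mul_one]

theorem map_transversal_inv_mul (g : CoprodI C) (a : A) :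
    c ((T.transversal (g • a))⁻¹ * g * T.transversal a) a₀ = c g a := by
  have map_inv : c (T.transversal (g • a))⁻¹ (g • a) = 1 := by
    simpa only [T.transversal_smul, hc.map_transversal hE, inv_one] using
      hc.isActionCocycle.map_inv (T.transversal (g • a)) a₀
  rw [hc.isActionCocycle, hc.isActionCocycle, T.transversal_smul, hc.map_transversal hE, map_inv,
    one_mul, mul_one]

theorem map_loop (i : ι) (a : A) : c (T.loop i a) a₀ = E i a := by
  have := hc.map_transversal_inv_mul hE (T.factorTransversal i a) a₀
  rwa [T.factorTransversal_smul, T.transversal_base, mul_one,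
    hc.map_factorTransversal hE, hc.map_transversal hE, mul_one] at this

theorem map_vertexGroup {i : ι} {a : A} (ha : T.rep i a = a) (v : T.vertexGroup i a) :
    c v a₀ = σ i a ha v := by
  obtain ⟨_, hv, x, rfl⟩ := v
  have hconj : (T.transversal a)⁻¹ * of x * T.transversal a ∈
      MulAction.stabilizer (CoprodI C) a₀ := by simpa using hv
  have hx : (of x : CoprodI C) • a = a := by
    rwa [MulAction.mem_stabilizer_iff, mul_smul, mul_smul, T.transversal_smul, inv_smul_eq_iff,
      T.transversal_smul] at hconj
  have E_eq_one : E i a = 1 := hE i a (by simpa only [ha] using T.loop_rep i a)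
  have v_eq : (MulAut.conj (T.transversal a)⁻¹) (of x) =
      (T.transversal a)⁻¹ * of x * T.transversal a := by simp
  have c_eq := hc.map_transversal_inv_mul hE (of x) a
  rw [hc.map_of, hx, E_eq_one, one_mul, inv_one, mul_one] at c_eq
  refine (congrArg (c · a₀) v_eq).trans (c_eq.trans ?_)
  exact T.vertexHom_congr σ _ ha ha ((T.vertexLoop_of_rep_eq ha hx).trans v_eq.symm)

end IsTwistedCocycle

variable {E} in
theorem exists_stabilizerHom (hE : ∀ i a, T.loop i a = 1 → E i a = 1) :
    ∃ f : MulAction.stabilizer (CoprodI C) a₀ →* L,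
      (∀ i a, f ⟨T.loop i a, T.loop_mem_stabilizer i a⟩ = E i a) ∧
      ∀ i a (ha : T.rep i a = a) (v : T.vertexGroup i a), f ⟨v, v.2.1⟩ = σ i a ha v := by
  obtain ⟨c, hc⟩ := T.exists_isTwistedCocycle E σ
  exact ⟨hc.isActionCocycle.stabilizerHom a₀, hc.map_loop hE, fun i a => hc.map_vertexGroup hE⟩

end UniversalProperty

/-- The factors of the stabilizer of `a₀`, indexed by the nontrivial loops and by the
representatives of the orbits of the factors `C i`. -/
def factor : {p : ι × A // T.loop p.1 p.2 ≠ 1} ⊕ {p : ι × A // T.rep p.1 p.2 = p.2} →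
    Subgroup (CoprodI C) :=
  Sum.elim (fun p => Subgroup.zpowers (T.loop p.1.1 p.1.2)) fun p => T.vertexGroup p.1.1 p.1.2

theorem factor_le_stabilizer (k) : T.factor k ≤ MulAction.stabilizer (CoprodI C) a₀ := by
  rcases k with p | p
  · exact Subgroup.zpowers_le.mpr (T.loop_mem_stabilizer _ _)
  · exact inf_le_left

theorem loop_mem_iSup_factor (i : ι) (a : A) : T.loop i a ∈ ⨆ k, T.factor k := by
  by_cases h : T.loop i a = 1
  · rw [h]
    exact one_mem _
  · exact Subgroup.mem_iSup_of_mem (Sum.inl ⟨(i, a), h⟩) (Subgroup.mem_zpowers _)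

theorem transversal_inv_mul_mem_iSup_factor (g : CoprodI C) (a : A) :
    (T.transversal (g • a))⁻¹ * g * T.transversal a ∈ ⨆ k, T.factor k := by
  induction g using CoprodI.induction_on generalizing a with
  | one => simp
  | of i x =>
    have vertexLoop_mem : (T.vertexLoop i x a : CoprodI C) ∈ ⨆ k, T.factor k :=
      le_iSup T.factor (.inr ⟨(i, T.rep i a), T.rep_rep i a⟩) (T.vertexLoop i x a).2
    have := mul_mem (mul_mem (T.loop_mem_iSup_factor i ((of x : CoprodI C) • a)) vertexLoop_mem)
      (inv_mem (T.loop_mem_iSup_factor i a))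
    simpa [loop, vertexLoop, mul_assoc] using this
  | mul g h hg hh => simpa [mul_smul, mul_assoc] using mul_mem (hg (h • a)) (hh a)

theorem iSup_factor : ⨆ k, T.factor k = MulAction.stabilizer (CoprodI C) a₀ := by
  refine le_antisymm (iSup_le T.factor_le_stabilizer) fun g hg => ?_
  have := T.transversal_inv_mul_mem_iSup_factor g a₀
  rwa [MulAction.mem_stabilizer_iff.mp hg, T.transversal_base, inv_one, one_mul, mul_one] at this

theorem not_isOfFinOrder_loop {i : ι} {a : A} (h : T.loop i a ≠ 1) :
    ¬ IsOfFinOrder (T.loop i a) := by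
  classical
  obtain ⟨f, f_loop, -⟩ := T.exists_stabilizerHom
    (E := fun i a => if T.loop i a = 1 then 1 else Multiplicative.ofAdd (1 : ℤ))
    (fun _ _ _ => 1) fun i a h => if_pos h
  intro loop_finite
  have loop_finite' : IsOfFinOrder (⟨_, T.loop_mem_stabilizer i a⟩ : MulAction.stabilizer _ a₀) :=
    Submonoid.isOfFinOrder_coe.mp loop_finite
  have one_finite := f.isOfFinOrder loop_finite'
  rw [f_loop, if_neg h, isOfFinOrder_ofAdd_iff] at one_finite
  exact not_isOfFinAddOrder_of_isAddTorsionFree one_ne_zero one_finite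

theorem lift_factor_injective :
    Function.Injective (CoprodI.lift fun k => (T.factor k).subtype) := by
  classical
  let ofLoop (i : ι) (a : A) (h : T.loop i a ≠ 1) : CoprodI fun k => ↥(T.factor k) :=
    of (M := fun k => ↥(T.factor k)) (i := Sum.inl ⟨(i, a), h⟩)
      ⟨T.loop i a, Subgroup.mem_zpowers _⟩
  obtain ⟨f, f_loop, f_vertexGroup⟩ := T.exists_stabilizerHom
    (E := fun i a => if h : T.loop i a = 1 then 1 else ofLoop i a h)
    (fun i a ha => of (M := fun k => ↥(T.factor k)) (i := Sum.inr ⟨(i, a), ha⟩))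
    fun i a h => dif_pos h
  refine coprodI_lift_subtype_injective T.factor_le_stabilizer f ?_
  rintro (⟨⟨i, a⟩, h⟩ | ⟨⟨i, a⟩, ha⟩) x
  · let y : T.factor (.inl ⟨(i, a), h⟩) := ⟨T.loop i a, Subgroup.mem_zpowers _⟩
    have f_y : f ⟨y, T.factor_le_stabilizer _ y.2⟩ = ofLoop i a h := (f_loop i a).trans (dif_neg h)
    obtain ⟨n, rfl⟩ : ∃ n : ℤ, y ^ n = x := x.2.imp fun n hn => Subtype.ext hn
    exact ((map_zpow f _ n).trans (congrArg (· ^ n) f_y)).trans (map_zpow _ y n).symm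
  · exact f_vertexGroup i a ha x

end KuroshSystem

end KuroshSystems

theorem isCyclic_of_le_range {K G : Type*} [Group K] [IsCyclic K] [Group G] (f : K →* G)
    {F : Subgroup G} (hF : F ≤ f.range) : IsCyclic F :=
  have := isCyclic_of_surjective f.rangeRestrict f.rangeRestrict_surjective
  isCyclic_of_injective (Subgroup.inclusion hF) (Subgroup.inclusion_injective hF)

/-- The Kurosh subgroup theorem. The free part of `H` is split into infinite cyclic factors. -/
theorem subgroup_of_free_product_of_cyclics_general {ι : Type u} {C : ι → Type v}
    [∀ i, Group (C i)] (H : Subgroup (Monoid.CoprodI C)) :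
    ∃ (κ : Type (max u v)) (F : κ → Subgroup (Monoid.CoprodI C)),
      (∀ k, (∃ x, F k = Subgroup.zpowers x ∧ ¬ IsOfFinOrder x) ∨
        ∃ i g, F k = H ⊓ ((MulAut.conj g).toMonoidHom.comp (Monoid.CoprodI.of (i := i))).range) ∧
      Function.Injective (Monoid.CoprodI.lift fun k => (F k).subtype) ∧
      (Monoid.CoprodI.lift fun k => (F k).subtype).range = H := by
  obtain ⟨T⟩ := nonempty_kuroshSystem C ((1 : Monoid.CoprodI C) : Monoid.CoprodI C ⧸ H)
  refine ⟨_, T.factor, ?_, T.lift_factor_injective, ?_⟩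
  · rintro (p | p)
    · exact .inl ⟨_, rfl, T.not_isOfFinOrder_loop p.2⟩
    · exact .inr ⟨p.1.1, (T.transversal p.1.2)⁻¹,
        congrArg (· ⊓ _) (MulAction.stabilizer_quotient H)⟩
  · simp only [Monoid.CoprodI.range_eq_iSup, Subgroup.range_subtype, T.iSup_factor,
      MulAction.stabilizer_quotient]

/-- **Kurosh subgroup theorem for free products of cyclic groups.** Every subgroup of a
free product of a family of cyclic groups is isomorphic to a free product of a family of
cyclic groups.  (Here a cyclic group is one generated by a single element; every cyclic
group is isomorphic to `Multiplicative (ZMod m)` for a unique `m ≥ 0`, with `m = 0`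
giving the infinite cyclic group.) -/
theorem subgroup_of_free_product_of_cyclics {ι : Type u} (C : ι → Type u)
    [∀ i, Group (C i)] (hC : ∀ i, ∃ c : C i, Subgroup.zpowers c = ⊤)
    (H : Subgroup (Monoid.CoprodI C)) :
    ∃ (κ : Type u) (m : κ → ℕ),
      Nonempty (H ≃* Monoid.CoprodI (fun k => Multiplicative (ZMod (m k)))) := by
  obtain ⟨κ, F, hF, injective_lift, range_lift⟩ := subgroup_of_free_product_of_cyclics_general H
  have isCyclic_factor (k : κ) : IsCyclic (F k) := by
    obtain ⟨x, hx, -⟩ | ⟨i, g, hg⟩ := hF k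
    · exact (F k).isCyclic_iff_exists_zpowers_eq_top.mpr ⟨x, hx.symm⟩
    · have : IsCyclic (C i) := isCyclic_iff_exists_zpowers_eq_top.mpr (hC i)
      exact isCyclic_of_le_range _ (hg.trans_le inf_le_right)
  exact ⟨κ, fun k => Nat.card (F k), ⟨(MulEquiv.subgroupCongr range_lift).symm.trans <|
    (MonoidHom.ofInjective injective_lift).symm.trans <|
    coprodICongr fun k => (zmodCyclicMulEquiv (isCyclic_factor k)).symm⟩⟩
end
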